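/- arXiv:1407.3313 — 3 statements merged into one kernel-verified Lean document; each statement's English description precedes it below -/
import Mathlib

section
/- Let Ω ⊂ ℝ^n be a bounded Lipschitz domain and s ∈ (0,1). Then there exist a nondecreasing sequence of nonnegative real numbers 0 = λ_1 < λ_2 ≤ λ_3 ≤ ⋯ and a sequence of functions u_i : ℝ^n → ℝ such that, for each i, u_i is a weak solution of (−Δ)^s u_i = λ_i u_i in Ω with N_s u_i = 0 in ℝ^n\closure(Ω), and the restrictions of the u_i to Ω form a complete orthogonal system in L²(Ω). -/
/-!
The Neumann eigenvalues come from the spectral theorem for a compact operator on `L²(Ω)`.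

The energy space `H^s_{Ω,0}` is realized as the set `hsGraph` of pairs `(u|_Ω, u x - u y)` in
`L²(Ω) × L²(nuQ)`, where `nuQ` is the measure `|x - y|^{-(n + 2s)} dx dy` on `Q(Ω)`. This subspace
is closed (`isClosed_hsGraph`), so it is a Hilbert space, and restriction to `Ω` is a bounded
operator `T` from it to `L²(Ω)`.

The operator `T` is compact (`isCompactOperator_restrMap`): a bounded Lipschitz domain satisfies
an interior corkscrew condition (`corkscrew`), hence `Ω ∩ B(x, t)` has volume at least `c t ^ n`,
and comparing `u` on small pieces of `Ω` with its values on such sets approximates `u` by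
piecewise constants with squared `L²` error at most `C t^{2s}` times the energy
(`approx_estimate`). The range of `T` is dense (`eq_zero_of_orthogonal_range`), as it contains the
smooth compactly supported functions (`energy_finite`).

Therefore `T T†` is compact, symmetric and positive definite on the infinite-dimensional space
`L²(Ω)`, and it has a complete orthonormal system of eigenvectors `e i` with eigenvalues `μ i`,
positive and nonincreasing (`exists_singular_seq`). Put `w i = T† (e i)`. The relation
`⟪w i, v⟫ = ⟪e i, T v⟫` says that a function `U i` representing `w i` is a weak Neumann
eigenfunction with eigenvalue `lam i = c_{n,s} / 2 * (1 / μ i - 1)`, and `U i = μ i • e i` on `Ω`.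
Nonnegativity of the energy gives `μ i ≤ 1`. Constants have zero energy, which forces `μ 0 = 1`,
and functions of zero energy are constant on `Ω` (`ae_const_of_snd_eq_zero`), which forces
`μ 1 < 1`.
-/

open MeasureTheory Filter Set Bornology
open scoped Topology ENNReal NNReal Pointwise symmDiff

noncomputable section

/-- `ℝ^n` as a Euclidean space. -/
abbrev En (n : ℕ) := EuclideanSpace ℝ (Fin n)

/-- The normalization constant `c_{n,s}` of the fractional Laplacian. -/
def cns (n : ℕ) (s : ℝ) : ℝ :=
  4 ^ s * Real.Gamma ((n : ℝ) / 2 + s) / (Real.pi ^ ((n : ℝ) / 2) * |Real.Gamma (-s)|)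

/-- `Q(Ω) = ℝ^{2n} \ (CΩ × CΩ)`. -/
def Qset (n : ℕ) (Ω : Set (En n)) : Set (En n × En n) := (Ωᶜ ×ˢ Ωᶜ)ᶜ

/-- The kernel `|x-y|^{n+2s}`. -/
def nsKer (n : ℕ) (s : ℝ) (x y : En n) : ℝ := dist x y ^ ((n : ℝ) + 2 * s)

/-- The nonlocal normal derivative `N_s u (x) = c_{n,s} ∫_Ω (u x - u y)/|x-y|^{n+2s} dy`. -/
def NsD (n : ℕ) (s : ℝ) (Ω : Set (En n)) (u : En n → ℝ) (x : En n) : ℝ :=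
  cns n s * ∫ y in Ω, (u x - u y) / nsKer n s x y

/-- The renormalized nonlocal normal derivative `Ñ_s u`. -/
def NsTilde (n : ℕ) (s : ℝ) (Ω : Set (En n)) (u : En n → ℝ) (x : En n) : ℝ :=
  NsD n s Ω u x / (cns n s * ∫ y in Ω, (nsKer n s x y)⁻¹)

/-- The fractional Laplacian `(-Δ)^s u (x)`, defined as a principal value. -/
def fracLap (n : ℕ) (s : ℝ) (u : En n → ℝ) (x : En n) : ℝ :=
  cns n s * limUnder (𝓝[>] (0 : ℝ))
    (fun ε => ∫ y in {y : En n | ε ≤ dist x y}, (u x - u y) / nsKer n s x y)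

/-- The Gagliardo-type bilinear form over `Q(Ω)`. -/
def gagliardo2 (n : ℕ) (s : ℝ) (Ω : Set (En n)) (u v : En n → ℝ) : ℝ :=
  ∫ p in Qset n Ω, (u p.1 - u p.2) * (v p.1 - v p.2) / nsKer n s p.1 p.2

/-- Membership in the space `H^s_{Ω,g}`. -/
def InHs (n : ℕ) (s : ℝ) (Ω : Set (En n)) (g : En n → ℝ) (u : En n → ℝ) : Prop :=
  Measurable u ∧
  IntegrableOn (fun x => u x ^ 2) Ω ∧
  IntegrableOn (fun x => |g x| * u x ^ 2) Ωᶜ ∧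
  IntegrableOn (fun p : En n × En n => (u p.1 - u p.2) ^ 2 / nsKer n s p.1 p.2) (Qset n Ω)

/-- The squared norm of `H^s_{Ω,g}`. -/
def hsNormSq (n : ℕ) (s : ℝ) (Ω : Set (En n)) (g : En n → ℝ) (u : En n → ℝ) : ℝ :=
  (∫ x in Ω, u x ^ 2) + (∫ x in Ωᶜ, |g x| * u x ^ 2) + gagliardo2 n s Ω u u

/-- The scalar product of `H^s_{Ω,g}`. -/
def hsInner (n : ℕ) (s : ℝ) (Ω : Set (En n)) (g : En n → ℝ) (u v : En n → ℝ) : ℝ :=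
  (∫ x in Ω, u x * v x) + (∫ x in Ωᶜ, |g x| * (u x * v x)) + gagliardo2 n s Ω u v

/-- `u` is a weak solution of `(-Δ)^s u = f` in `Ω`, `N_s u = g` in `ℝ^n \ Ω̄`. -/
def IsWeakSol (n : ℕ) (s : ℝ) (Ω : Set (En n)) (f g : En n → ℝ) (u : En n → ℝ) : Prop :=
  InHs n s Ω (fun _ => 0) u ∧
  ∀ v : En n → ℝ, InHs n s Ω g v →
    cns n s / 2 * gagliardo2 n s Ω u v = (∫ x in Ω, f x * v x) + ∫ x in Ωᶜ, g x * v x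

/-- Last coordinate of a point of `ℝ^n`. -/
def lastCoord {n : ℕ} (x : En n) : ℝ :=
  if h : 0 < n then x ⟨n - 1, Nat.sub_lt h Nat.one_pos⟩ else 0

/-- The first `n-1` coordinates of a point of `ℝ^n`. -/
def frontCoords {n : ℕ} (x : En n) : EuclideanSpace ℝ (Fin (n - 1)) :=
  (WithLp.equiv 2 (Fin (n - 1) → ℝ)).symm fun i => x (Fin.castLE (Nat.sub_le n 1) i)

/-- A bounded Lipschitz domain: open, bounded, nonempty, and near each boundary point the
domain is (up to a rigid motion) the subgraph of a Lipschitz function. -/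
def IsLipschitzDomain (n : ℕ) (Ω : Set (En n)) : Prop :=
  IsOpen Ω ∧ IsBounded Ω ∧ Ω.Nonempty ∧
  ∀ p ∈ frontier Ω, ∃ (φ : En n ≃ᵢ En n) (γ : EuclideanSpace ℝ (Fin (n - 1)) → ℝ)
    (L : ℝ≥0) (r : ℝ), 0 < r ∧ LipschitzWith L γ ∧ φ p = 0 ∧
    (φ '' Ω) ∩ Metric.ball 0 r = {x : En n | lastCoord x < γ (frontCoords x)} ∩ Metric.ball 0 r

/-- A bounded domain with `C¹` boundary. -/
def IsC1Domain (n : ℕ) (Ω : Set (En n)) : Prop :=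
  IsOpen Ω ∧ IsBounded Ω ∧ Ω.Nonempty ∧
  ∀ p ∈ frontier Ω, ∃ (φ : En n ≃ᵢ En n) (γ : EuclideanSpace ℝ (Fin (n - 1)) → ℝ)
    (r : ℝ), 0 < r ∧ ContDiff ℝ 1 γ ∧ φ p = 0 ∧
    (φ '' Ω) ∩ Metric.ball 0 r = {x : En n | lastCoord x < γ (frontCoords x)} ∩ Metric.ball 0 r

/-- The Laplacian `Δu = ∑ ∂²u/∂xᵢ²`. -/
def lapl {n : ℕ} (u : En n → ℝ) (x : En n) : ℝ :=
  ∑ i : Fin n,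
    fderiv ℝ (fun y => fderiv ℝ u y (EuclideanSpace.single i (1 : ℝ))) x
      (EuclideanSpace.single i (1 : ℝ))

/-- The surface measure `ω_{n-1}` of the unit sphere of `ℝ^n`. -/
def sphereSurf (n : ℕ) : ℝ := n * (volume (Metric.ball (0 : En n) 1)).toReal

/-- The unit vector `e_n`. -/
def eLast (n : ℕ) : En n :=
  if h : 0 < n then EuclideanSpace.single (⟨n - 1, Nat.sub_lt h Nat.one_pos⟩ : Fin n) (1 : ℝ)
  else 0

/-- The halfspace `Π = {x_n < 0}`. -/
def halfSpaceNeg (n : ℕ) : Set (En n) := {x : En n | lastCoord x < 0}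

end

/-! ### Spectral theory of compact operators -/

/-- A positive family with finitely many terms above each `ε > 0` can be listed in nonincreasing
order. The index type is ordered by decreasing value, ties being broken by an injection into `ℕ`;
every initial segment is then finite, so the order type is that of `ℕ`. -/
theorem exists_antitone_enum {ι : Type*} [Infinite ι] (f : ι → ℝ) (hpos : ∀ i, 0 < f i)
    (hfin : ∀ ε : ℝ, 0 < ε → {i | ε ≤ f i}.Finite) : ∃ e : ℕ ≃ ι, Antitone (f ∘ e) := by
  have hc : Countable ι := by
    have : (⋃ k : ℕ, {i | 1 / ((k : ℝ) + 1) ≤ f i}) = univ := by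
      ext i
      simp only [mem_iUnion, mem_univ, iff_true]
      obtain ⟨k, hk⟩ := exists_nat_one_div_lt (hpos i)
      exact ⟨k, hk.le⟩
    rw [← Set.countable_univ_iff, ← this]
    exact Set.countable_iUnion fun k => (hfin _ (by positivity)).countable
  obtain ⟨g, hg⟩ := exists_injective_nat ι
  let key : ι → ℝᵒᵈ ×ₗ ℕ := fun i => toLex (OrderDual.toDual (f i), g i)
  have hkey : Function.Injective key := fun i j h => hg (by
    have := congrArg (fun z => (ofLex z).2) h
    exact this)
  let : LinearOrder ι := LinearOrder.lift' key hkey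
  have hle : ∀ i j : ι, i ≤ j → f j ≤ f i := by
    intro i j h
    have h' : key i ≤ key j := h
    rw [Prod.Lex.le_iff] at h'
    rcases h' with h' | h'
    · exact (show f j < f i from h').le
    · exact (show f i = f j from h'.1).ge
  have hIic : ∀ i : ι, (Set.Iic i).Finite := fun i =>
    (hfin (f i) (hpos i)).subset fun j hj => hle j i hj
  let : LocallyFiniteOrder ι := LocallyFiniteOrder.ofFiniteIcc fun a b =>
    (hIic b).subset Set.Icc_subset_Iic_self
  have : NoMaxOrder ι := ⟨fun a => by
    by_contra! h
    exact Set.infinite_univ ((hIic a).subset fun x _ => h x)⟩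
  have hbot : ∃ b : ι, ∀ a, b ≤ a := by
    obtain ⟨i₀⟩ : Nonempty ι := inferInstance
    obtain ⟨b, hb, hb'⟩ := Set.exists_min_image (Set.Iic i₀) id (hIic i₀) ⟨i₀, Set.mem_Iic.2 le_rfl⟩
    refine ⟨b, fun a => ?_⟩
    rcases le_total a i₀ with h | h
    · exact hb' a h
    · exact le_trans hb h
  let : OrderBot ι := { bot := hbot.choose, bot_le := hbot.choose_spec }
  let : SuccOrder ι := LinearLocallyFiniteOrder.succOrder ι
  let : PredOrder ι := LinearLocallyFiniteOrder.predOrder ι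
  let e : ι ≃o ℕ := orderIsoNatOfLinearSuccPredArch
  exact ⟨e.symm.toEquiv, fun a b hab => hle _ _ (e.symm.monotone hab)⟩

/-- Spectral theorem for a compact positive definite operator on an infinite-dimensional Hilbert
space, with the eigenvalues listed in nonincreasing order and repeated by multiplicity. -/
theorem exists_eigen_seq {E : Type*} [NormedAddCommGroup E] [InnerProductSpace ℝ E]
    [CompleteSpace E] (hE : ¬ FiniteDimensional ℝ E) (S : E →L[ℝ] E) (hc : IsCompactOperator S)
    (hsym : (S : E →ₗ[ℝ] E).IsSymmetric) (hpos : ∀ x, x ≠ 0 → 0 < inner ℝ (S x) x) :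
    ∃ (μ : ℕ → ℝ) (e : ℕ → E), Orthonormal ℝ e ∧ (∀ i, S (e i) = μ i • e i) ∧ Antitone μ ∧
      (∀ i, 0 < μ i) ∧ ∀ x, (∀ i, inner ℝ x (e i) = 0) → x = 0 := by
  let V : ℝ → Submodule ℝ E := fun μ => Module.End.eigenspace (S : E →ₗ[ℝ] E) μ
  have hV0 : V 0 = ⊥ := by
    rw [eq_bot_iff]
    intro x hx
    rw [Module.End.mem_eigenspace_iff] at hx
    by_contra hne
    have := hpos x hne
    have h2 : S x = 0 := by simpa using hx
    simp [h2] at this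
  have : ∀ μ, FiniteDimensional ℝ (V μ) := by
    intro μ
    rcases eq_or_ne μ 0 with h | h
    · rw [h, hV0]; infer_instance
    · exact ContinuousLinearMap.finite_dimensional_eigenspace hc μ h
  let ι := Σ μ : ℝ, Fin (Module.finrank ℝ (V μ))
  let b : ι → E := fun i => (stdOrthonormalBasis ℝ (V i.1) i.2 : E)
  have hb : Orthonormal ℝ b :=
    (hsym.orthogonalFamily_eigenspaces).orthonormal_sigma_orthonormal
      (fun μ => (stdOrthonormalBasis ℝ (V μ)).orthonormal)
  have heig : ∀ i : ι, S (b i) = i.1 • b i := fun i => by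
    have := (stdOrthonormalBasis ℝ (V i.1) i.2).2
    exact Module.End.mem_eigenspace_iff.mp this
  have hcomp : ∀ x, (∀ i, inner ℝ x (b i) = 0) → x = 0 := by
    intro x hx
    have hbot := ContinuousLinearMap.orthogonalComplement_iSup_eigenspaces_eq_bot hc hsym
    have : x ∈ (⨆ μ, V μ)ᗮ := by
      rw [← Submodule.iInf_orthogonal, Submodule.mem_iInf]
      intro μ
      rw [Submodule.mem_orthogonal']
      intro u hu
      have h1 := (stdOrthonormalBasis ℝ (V μ)).sum_repr ⟨u, hu⟩
      have h2 : u = ∑ i, (stdOrthonormalBasis ℝ (V μ)).repr ⟨u, hu⟩ i • b ⟨μ, i⟩ := by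
        have := congrArg (Subtype.val) h1
        simpa [b] using this.symm
      rw [h2, inner_sum]
      exact Finset.sum_eq_zero fun i _ => by rw [inner_smul_right, hx, mul_zero]
    rw [hbot] at this
    simpa using this
  have hμpos : ∀ i : ι, 0 < i.1 := fun i => by
    have := hpos (b i) (hb.ne_zero i)
    rw [heig, inner_smul_left, real_inner_self_eq_norm_sq, hb.1 i] at this
    simpa using this
  have : Infinite ι := by
    by_contra hinf
    rw [not_infinite_iff_finite] at hinf
    apply hE
    -- A finite total orthonormal family would span `E`.
    have hsp : (Submodule.span ℝ (Set.range b))ᗮ = ⊥ := by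
      rw [eq_bot_iff]
      intro x hx
      rw [Submodule.mem_orthogonal'] at hx
      exact hcomp x fun i => hx _ (Submodule.subset_span ⟨i, rfl⟩)
    have : FiniteDimensional ℝ (Submodule.span ℝ (Set.range b)) :=
      FiniteDimensional.span_of_finite ℝ (Set.finite_range b)
    rw [Submodule.orthogonal_eq_bot_iff] at hsp
    rw [hsp] at this
    exact Module.Finite.of_surjective (Submodule.topEquiv (R := ℝ) (M := E)).toLinearMap
      Submodule.topEquiv.surjective
  have hfin : ∀ ε : ℝ, 0 < ε → {i : ι | ε ≤ i.1}.Finite := by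
    intro ε hε
    by_contra hinf
    have hinf : {i : ι | ε ≤ i.1}.Infinite := hinf
    -- Distinct eigenvectors with eigenvalues at least `ε` have images more than `ε` apart, so the
    -- images of infinitely many of them have no convergent subsequence.
    let j := hinf.natEmbedding
    have hK := hc.isCompact_closure_image_closedBall (f := (S : E →ₗ[ℝ] E)) 1
    obtain ⟨y, -, φ, hφ, hlim⟩ := hK.tendsto_subseq (x := fun k => S (b (j k))) (fun k =>
      subset_closure ⟨b (j k), by simp [hb.1], rfl⟩)
    have hcau := hlim.cauchySeq
    rw [Metric.cauchySeq_iff] at hcau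
    obtain ⟨N, hN⟩ := hcau ε hε
    have h1 := hN N le_rfl (N + 1) (Nat.le_succ N)
    set p : ι := (j (φ N)).1 with hp
    set q : ι := (j (φ (N + 1))).1 with hq
    have hpq : p ≠ q := by
      intro h
      have := hφ.injective (j.injective (Subtype.ext h))
      omega
    have hpε : ε ≤ p.1 := (j (φ N)).2
    have h2 : ‖S (b p) - S (b q)‖ < ε := by
      rw [← dist_eq_norm]; exact h1
    have h3 : ‖S (b p) - S (b q)‖ ^ 2 = p.1 ^ 2 + q.1 ^ 2 := by
      rw [@norm_sub_sq_real, heig, heig, inner_smul_left, inner_smul_right, hb.2 hpq, norm_smul,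
        norm_smul, hb.1, hb.1]
      simp
    have := norm_nonneg (S (b p) - S (b q))
    nlinarith [sq_nonneg q.1]
  obtain ⟨e, he⟩ := exists_antitone_enum (fun i : ι => i.1) hμpos hfin
  refine ⟨fun k => (e k).1, fun k => b (e k), hb.comp _ e.injective, fun k => heig _, he,
    fun k => hμpos _, fun x hx => hcomp x fun i => ?_⟩
  simpa using hx (e.symm i)

/-- A compact operator `T` with dense range (expressed through orthogonality) in an
infinite-dimensional Hilbert space has eigenvectors `e i` of `T T†`, forming a complete
orthonormal system, with eigenvalues `μ i > 0`. The vectors `w i = T† (e i)` represent the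
functionals `v ↦ ⟪e i, T v⟫` and satisfy `T (w i) = μ i • e i`. -/
theorem exists_singular_seq {H E : Type*} [NormedAddCommGroup H] [InnerProductSpace ℝ H]
    [CompleteSpace H] [NormedAddCommGroup E] [InnerProductSpace ℝ E] [CompleteSpace E]
    (hE : ¬ FiniteDimensional ℝ E) (T : H →L[ℝ] E) (hTc : IsCompactOperator T)
    (hdense : ∀ x, (∀ w, inner ℝ x (T w) = 0) → x = 0) :
    ∃ (μ : ℕ → ℝ) (e : ℕ → E) (w : ℕ → H), Orthonormal ℝ e ∧ (∀ i, T (w i) = μ i • e i) ∧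
      (∀ i v, inner ℝ (w i) v = inner ℝ (e i) (T v)) ∧ Antitone μ ∧ (∀ i, 0 < μ i) ∧
      ∀ x, (∀ i, inner ℝ x (e i) = 0) → x = 0 := by
  have hsym : ((T.comp T.adjoint : E →L[ℝ] E) : E →ₗ[ℝ] E).IsSymmetric := by
    intro x y
    change inner ℝ (T (T.adjoint x)) y = inner ℝ x (T (T.adjoint y))
    exact (ContinuousLinearMap.adjoint_inner_right T (T.adjoint x) y).symm.trans
      (ContinuousLinearMap.adjoint_inner_left T (T.adjoint y) x)
  have hpos : ∀ x, x ≠ 0 → 0 < inner ℝ ((T.comp T.adjoint) x) x := by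
    intro x hx
    change 0 < inner ℝ (T (T.adjoint x)) x
    rw [← ContinuousLinearMap.adjoint_inner_right, real_inner_self_eq_norm_sq]
    have : T.adjoint x ≠ 0 := fun h => hx <| hdense x fun w => by
      rw [← ContinuousLinearMap.adjoint_inner_left, h, inner_zero_left]
    positivity
  obtain ⟨μ, e, he, hev, hanti, hμ, htot⟩ :=
    exists_eigen_seq hE (T.comp T.adjoint) (hTc.comp_clm T.adjoint) hsym hpos
  exact ⟨μ, e, fun i => T.adjoint (e i), he, hev,
    fun i v => ContinuousLinearMap.adjoint_inner_left T v (e i), hanti, hμ, htot⟩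

/-! ### The interior corkscrew condition -/

theorem abs_lastCoord_sub_le {n : ℕ} (x y : En n) : |lastCoord x - lastCoord y| ≤ dist x y := by
  unfold lastCoord
  split_ifs with h
  · have := PiLp.norm_apply_le (x - y) ⟨n - 1, Nat.sub_lt h Nat.one_pos⟩
    rw [dist_eq_norm]
    simpa using this
  · simp

theorem dist_frontCoords_le {n : ℕ} (x y : En n) :
    dist (frontCoords x) (frontCoords y) ≤ dist x y := by
  rw [EuclideanSpace.dist_eq, EuclideanSpace.dist_eq]
  apply Real.sqrt_le_sqrt
  have hinj : Function.Injective (Fin.castLE (Nat.sub_le n 1)) := Fin.castLE_injective _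
  calc ∑ i, dist (frontCoords x i) (frontCoords y i) ^ 2
      = ∑ i ∈ Finset.univ.map ⟨_, hinj⟩, dist (x i) (y i) ^ 2 := by
        rw [Finset.sum_map]; rfl
    _ ≤ _ := Finset.sum_le_sum_of_subset_of_nonneg (Finset.subset_univ _)
        fun _ _ _ => by positivity

/-- The last basis vector: subtracting `t` times it lowers the last coordinate by `t` and fixes
the others. -/
theorem exists_unit_down {n : ℕ} (hn : 0 < n) : ∃ v : En n, ‖v‖ = 1 ∧
    ∀ (x : En n) (t : ℝ), lastCoord (x - t • v) = lastCoord x - t ∧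
      frontCoords (x - t • v) = frontCoords x := by
  refine ⟨EuclideanSpace.single ⟨n - 1, Nat.sub_lt hn Nat.one_pos⟩ 1, by simp, fun x t => ⟨?_, ?_⟩⟩
  · simp [lastCoord, hn]
  · ext i
    have : Fin.castLE (Nat.sub_le n 1) i ≠ ⟨n - 1, Nat.sub_lt hn Nat.one_pos⟩ := by
      intro h
      have := congrArg Fin.val h
      have h2 := i.2
      simp at this
      omega
    simp [frontCoords, this]

/-- The interior corkscrew condition near a point of the closure. At a boundary point, where `Ω`
is the region below an `L`-Lipschitz graph, descending by `t / 2` from a point of `Ω` leaves room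
for a ball of radius `t / (2 (1 + L))`. -/
theorem corkscrew_local {n : ℕ} (hn : 0 < n) {Ω : Set (En n)} (hΩ : IsLipschitzDomain n Ω)
    (p : En n) (hp : p ∈ closure Ω) : ∃ κ > 0, ∃ ρ > 0, ∀ x ∈ Ω, dist x p < ρ →
      ∀ t, 0 < t → t ≤ ρ → ∃ y, Metric.ball y (κ * t) ⊆ Ω ∩ Metric.ball x t := by
  obtain ⟨hop, -, -, hbd⟩ := hΩ
  by_cases hpΩ : p ∈ Ω
  · obtain ⟨r, hr, hball⟩ := Metric.isOpen_iff.mp hop p hpΩ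
    refine ⟨1, one_pos, r / 2, by positivity, fun x _ hxp t ht htr => ⟨x, fun z hz => ?_⟩⟩
    rw [one_mul] at hz
    refine ⟨hball ?_, hz⟩
    rw [Metric.mem_ball] at hz ⊢
    linarith [dist_triangle z x p]
  · have hpf : p ∈ frontier Ω := by
      rw [frontier, hop.interior_eq]; exact ⟨hp, hpΩ⟩
    obtain ⟨φ, γ, L, r, hr, hγ, hφp, hloc⟩ := hbd p hpf
    obtain ⟨v, hv, hv'⟩ := exists_unit_down hn
    set κ : ℝ := 1 / (2 * (1 + L)) with hκ
    have hL : (0 : ℝ) ≤ L := L.2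
    have hκpos : 0 < κ := by positivity
    have hκ1 : κ * (1 + L) = 1 / 2 := by rw [hκ]; field_simp
    have hκ2 : κ ≤ 1 / 2 := by nlinarith
    refine ⟨κ, hκpos, r / 2, by positivity, fun x hx hxp t ht htr =>
      ⟨φ.symm (φ x - (t / 2) • v), fun z hz => ?_⟩⟩
    have hx0 : dist (φ x) 0 < r / 2 := by rw [← hφp, φ.dist_eq]; exact hxp
    have hz1 : dist (φ z) (φ x - (t / 2) • v) < κ * t := by
      rw [Metric.mem_ball] at hz
      rw [← φ.dist_eq, φ.apply_symm_apply] at hz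
      exact hz
    have hd : dist (φ x - (t / 2) • v) (φ x) = t / 2 := by
      rw [dist_eq_norm]; simp [norm_smul, hv, abs_of_pos ht]
    have hκt : κ * t ≤ t / 2 := by nlinarith
    have hzx : dist (φ z) (φ x) < t := by
      linarith [dist_triangle (φ z) (φ x - (t / 2) • v) (φ x)]
    have hxin : lastCoord (φ x) < γ (frontCoords (φ x)) := by
      have : φ x ∈ (φ '' Ω) ∩ Metric.ball 0 r := ⟨⟨x, hx, rfl⟩, by
        rw [Metric.mem_ball]; linarith⟩
      rw [hloc] at this
      exact this.1
    have hzin : φ z ∈ {x : En n | lastCoord x < γ (frontCoords x)} ∩ Metric.ball 0 r := by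
      refine ⟨?_, ?_⟩
      · have h1 := abs_le.mp (abs_lastCoord_sub_le (φ z) (φ x - (t / 2) • v))
        have h2 := dist_frontCoords_le (φ z) (φ x - (t / 2) • v)
        rw [(hv' _ _).2] at h2
        rw [(hv' _ _).1] at h1
        have h3 := hγ.dist_le_mul (frontCoords (φ z)) (frontCoords (φ x))
        rw [Real.dist_eq] at h3
        have h4 := abs_le.mp h3
        have h5 : (L : ℝ) * dist (frontCoords (φ z)) (frontCoords (φ x)) ≤ L * (κ * t) := by
          gcongr; linarith
        have h6 : κ * t + L * (κ * t) = t / 2 := by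
          linear_combination t * hκ1
        show lastCoord (φ z) < γ (frontCoords (φ z))
        linarith [h1.2, h4.1]
      · rw [Metric.mem_ball]
        linarith [dist_triangle (φ z) (φ x) 0]
    rw [← hloc] at hzin
    obtain ⟨⟨z', hz', hzz⟩, -⟩ := hzin
    rw [φ.injective hzz] at hz'
    exact ⟨hz', by rw [Metric.mem_ball, ← φ.dist_eq]; exact hzx⟩

/-- Interior corkscrew condition for a bounded Lipschitz domain: `Ω ∩ B(x, t)` contains a ball of
radius comparable to `t`, uniformly in `x ∈ Ω` and in small `t`. It follows from the local version
by compactness of the closure. -/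
theorem corkscrew {n : ℕ} (hn : 0 < n) {Ω : Set (En n)} (hΩ : IsLipschitzDomain n Ω) :
    ∃ κ > 0, ∃ ρ > 0, ∀ x ∈ Ω, ∀ t, 0 < t → t ≤ ρ →
      ∃ y, Metric.ball y (κ * t) ⊆ Ω ∩ Metric.ball x t := by
  have hcpt : IsCompact (closure Ω) := hΩ.2.1.isCompact_closure
  have key : ∃ κ > 0, ∃ ρ > 0, ∀ x ∈ Ω, x ∈ closure Ω → ∀ t, 0 < t → t ≤ ρ →
      ∃ y, Metric.ball y (κ * t) ⊆ Ω ∩ Metric.ball x t := by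
    refine hcpt.induction_on (p := fun A => ∃ κ > 0, ∃ ρ > 0, ∀ x ∈ Ω, x ∈ A → ∀ t, 0 < t → t ≤ ρ →
      ∃ y, Metric.ball y (κ * t) ⊆ Ω ∩ Metric.ball x t) ?_ ?_ ?_ ?_
    · exact ⟨1, one_pos, 1, one_pos, fun x _ h => h.elim⟩
    · rintro A B hAB ⟨κ, hκ, ρ, hρ, h⟩
      exact ⟨κ, hκ, ρ, hρ, fun x hx hxA => h x hx (hAB hxA)⟩
    · rintro A B ⟨κ, hκ, ρ, hρ, h⟩ ⟨κ', hκ', ρ', hρ', h'⟩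
      refine ⟨min κ κ', lt_min hκ hκ', min ρ ρ', lt_min hρ hρ', ?_⟩
      rintro x hx (hxA | hxB) t ht htρ
      · obtain ⟨y, hy⟩ := h x hx hxA t ht (htρ.trans (min_le_left _ _))
        exact ⟨y, (Metric.ball_subset_ball (by gcongr; exact min_le_left _ _)).trans hy⟩
      · obtain ⟨y, hy⟩ := h' x hx hxB t ht (htρ.trans (min_le_right _ _))
        exact ⟨y, (Metric.ball_subset_ball (by gcongr; exact min_le_right _ _)).trans hy⟩
    · intro p hp
      obtain ⟨κ, hκ, ρ, hρ, h⟩ := corkscrew_local hn hΩ p hp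
      exact ⟨Metric.ball p ρ, mem_nhdsWithin_of_mem_nhds (Metric.ball_mem_nhds p hρ),
        κ, hκ, ρ, hρ, fun x hx hxp => h x hx hxp⟩
  obtain ⟨κ, hκ, ρ, hρ, h⟩ := key
  exact ⟨κ, hκ, ρ, hρ, fun x hx => h x hx (subset_closure hx)⟩

/-! ### The weighted measure on `Q(Ω)` and the Poincaré estimate -/

theorem measurable_nsKer (n : ℕ) (s : ℝ) :
    Measurable fun p : En n × En n => nsKer n s p.1 p.2 := by
  unfold nsKer
  exact (measurable_fst.dist measurable_snd).pow_const _

/-- The measure `|x - y|^{-(n + 2s)} dx dy` on `Q(Ω)`, for which the Gagliardo form of `u` and `v`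
is the `L²` inner product of `u x - u y` and `v x - v y`. On the diagonal, which is Lebesgue-null
for `n ≥ 1`, the density takes the value `0⁻¹ = 0`. -/
noncomputable def nuQ (n : ℕ) (s : ℝ) (Ω : Set (En n)) : Measure (En n × En n) :=
  (volume.restrict (Qset n Ω)).withDensity fun p => ENNReal.ofReal (nsKer n s p.1 p.2)⁻¹

theorem nsKer_nonneg (n : ℕ) (s : ℝ) (x y : En n) : 0 ≤ nsKer n s x y :=
  Real.rpow_nonneg dist_nonneg _

theorem measurable_nuDensity (n : ℕ) (s : ℝ) :
    Measurable fun p : En n × En n => ENNReal.ofReal (nsKer n s p.1 p.2)⁻¹ :=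
  (measurable_nsKer n s).inv.ennreal_ofReal

theorem lintegral_nuQ {n : ℕ} {s : ℝ} {Ω : Set (En n)} (f : En n × En n → ℝ≥0∞)
    (hf : Measurable f) :
    ∫⁻ p, f p ∂(nuQ n s Ω) =
      ∫⁻ p in Qset n Ω, f p * ENNReal.ofReal (nsKer n s p.1 p.2)⁻¹ := by
  rw [nuQ, lintegral_withDensity_eq_lintegral_mul _ (measurable_nuDensity n s) hf]
  simp [mul_comm]

theorem integral_nuQ {n : ℕ} {s : ℝ} {Ω : Set (En n)} (f : En n × En n → ℝ) :
    ∫ p, f p ∂(nuQ n s Ω) = ∫ p in Qset n Ω, f p / nsKer n s p.1 p.2 := by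
  rw [nuQ, integral_withDensity_eq_integral_toReal_smul (measurable_nuDensity n s) (by simp)]
  refine integral_congr_ae (Eventually.of_forall fun p => ?_)
  simp only [ENNReal.toReal_ofReal (inv_nonneg.2 (nsKer_nonneg n s _ _)), smul_eq_mul]
  rw [div_eq_inv_mul]

theorem integrable_nuQ {n : ℕ} {s : ℝ} {Ω : Set (En n)} (f : En n × En n → ℝ) :
    Integrable f (nuQ n s Ω) ↔
      IntegrableOn (fun p => f p / nsKer n s p.1 p.2) (Qset n Ω) := by
  rw [nuQ, integrable_withDensity_iff (measurable_nuDensity n s) (by simp), IntegrableOn]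
  simp only [ENNReal.toReal_ofReal (inv_nonneg.2 (nsKer_nonneg n s _ _)), div_eq_mul_inv]

/-- Almost everywhere for `nuQ` means almost everywhere on `Q(Ω)` off the diagonal, since the density
is positive there. -/
theorem ae_nuQ_ne {n : ℕ} {s : ℝ} {Ω : Set (En n)} {P : En n × En n → Prop}
    (h : ∀ᵐ p ∂(nuQ n s Ω), P p) :
    ∀ᵐ p ∂(volume.restrict (Qset n Ω)), p.1 ≠ p.2 → P p := by
  rw [nuQ, ae_withDensity_iff (measurable_nuDensity n s)] at h
  filter_upwards [h] with p hp hne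
  apply hp
  have : 0 < nsKer n s p.1 p.2 := Real.rpow_pos_of_pos (dist_pos.2 hne) _
  simpa using this

theorem nuQ_absolutelyContinuous {n : ℕ} {s : ℝ} {Ω : Set (En n)} :
    nuQ n s Ω ≪ (volume : Measure (En n)).prod volume := by
  rw [← Measure.volume_eq_prod]
  exact (withDensity_absolutelyContinuous _ _).trans Measure.absolutelyContinuous_restrict

theorem mem_Qset {n : ℕ} {Ω : Set (En n)} {p : En n × En n} :
    p ∈ Qset n Ω ↔ p.1 ∈ Ω ∨ p.2 ∈ Ω := by
  simp only [Qset, mem_compl_iff, mem_prod]; tauto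

/-- A bounded set splits measurably into finitely many pieces (the fibres of `π`), each contained in
a ball of radius `t` centred at a point of the set. -/
theorem exists_partition {n : ℕ} {Ω : Set (En n)} (hb : IsBounded Ω) (hne : Ω.Nonempty)
    {t : ℝ} (ht : 0 < t) : ∃ (N : ℕ) (e : Fin (N + 1) → En n) (π : En n → Fin (N + 1)),
      (∀ k, e k ∈ Ω) ∧ Measurable π ∧ ∀ x ∈ Ω, dist x (e (π x)) < t := by
  have htb : TotallyBounded Ω := hb.isCompact_closure.totallyBounded.subset subset_closure
  obtain ⟨T, hTΩ, hTfin, hcov⟩ := (totallyBounded_iff_subset.mp htb) _ (Metric.dist_mem_uniformity ht)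
  have hTne : T.Nonempty := by
    obtain ⟨x, hx⟩ := hne
    have := hcov hx
    simp only [mem_iUnion] at this
    obtain ⟨y, hy, -⟩ := this
    exact ⟨y, hy⟩
  obtain ⟨e, he⟩ := hTfin.countable.exists_eq_range hTne
  have : ∀ y, ∃ k, y ∈ T → e k = y := by
    intro y
    by_cases hy : y ∈ T
    · rw [he] at hy; obtain ⟨k, hk⟩ := hy; exact ⟨k, fun _ => hk⟩
    · exact ⟨0, fun h => (hy h).elim⟩
  choose idx hidx using this
  let N := hTfin.toFinset.sup idx
  refine ⟨N, fun k => e k, fun x => Fin.ofNat (N + 1) (SimpleFunc.nearestPtInd e N x),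
    fun k => hTΩ (by rw [he]; exact ⟨_, rfl⟩),
    (measurable_from_nat (f := Fin.ofNat (N + 1))).comp (SimpleFunc.measurable _), fun x hx => ?_⟩
  have hval : ((Fin.ofNat (N + 1) (SimpleFunc.nearestPtInd e N x) : Fin (N + 1)) : ℕ) =
      SimpleFunc.nearestPtInd e N x := by
    simp only [Fin.val_ofNat]
    exact Nat.mod_eq_of_lt (Nat.lt_succ_of_le (SimpleFunc.nearestPtInd_le e N x))
  simp only [hval]
  have := hcov hx
  simp only [mem_iUnion] at this
  obtain ⟨y, hy, hxy⟩ := this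
  have hxy : dist x y < t := hxy
  have hle : idx y ≤ N := Finset.le_sup (f := idx) (hTfin.mem_toFinset.2 hy)
  have h1 := SimpleFunc.edist_nearestPt_le e x hle
  rw [hidx y hy, edist_dist, edist_dist, ENNReal.ofReal_le_ofReal_iff dist_nonneg] at h1
  rw [dist_comm]
  have h2 : dist (e (SimpleFunc.nearestPtInd e N x)) x ≤ dist y x := h1
  rw [dist_comm y x] at h2
  exact h2.trans_lt hxy

/-- Fractional Poincaré estimate at scale `t`. If every `Ω ∩ B(x, t)` with `x ∈ Ω` has volume at
least `m`, then `u` is approximated in `L²(Ω)` by a function constant on the pieces of a fixed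
finite partition, with squared error at most `m⁻¹ (2t)^{n + 2s}` times the energy of `u`. On each
piece the constant is a value `u y` at a point `y` of the corresponding ball where the squared
`L²` distance to `u` does not exceed its average over the ball. -/
theorem approx_estimate {n : ℕ} {s : ℝ} (hs : 0 < s) {Ω : Set (En n)} (hop : IsOpen Ω)
    (hb : IsBounded Ω) (hne : Ω.Nonempty) {m : ℝ≥0∞} (hm : m ≠ 0) {t : ℝ} (ht : 0 < t)
    (hcork : ∀ x ∈ Ω, m ≤ volume (Ω ∩ Metric.ball x t)) :
    ∃ (N : ℕ) (π : En n → Fin (N + 1)), Measurable π ∧ ∀ u : En n → ℝ, Measurable u →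
      ∃ c : Fin (N + 1) → ℝ,
        ∫⁻ x in Ω, ENNReal.ofReal ((u x - c (π x)) ^ 2) ≤
          m⁻¹ * ENNReal.ofReal ((2 * t) ^ ((n : ℝ) + 2 * s)) *
            ∫⁻ p, ENNReal.ofReal ((u p.1 - u p.2) ^ 2) ∂(nuQ n s Ω) := by
  obtain ⟨N, e, π, he, hπ, hπe⟩ := exists_partition hb hne ht
  refine ⟨N, π, hπ, fun u hu => ?_⟩
  have hΩm := hop.measurableSet
  set P : Fin (N + 1) → Set (En n) := fun k => Ω ∩ π ⁻¹' {k} with hP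
  set B : Fin (N + 1) → Set (En n) := fun k => Ω ∩ Metric.ball (e k) t with hB
  have hPm : ∀ k, MeasurableSet (P k) := fun k => hΩm.inter (hπ (measurableSet_singleton k))
  have hBm : ∀ k, MeasurableSet (B k) := fun k => hΩm.inter measurableSet_ball
  have hBv : ∀ k, m ≤ volume (B k) := fun k => hcork _ (he k)
  have hsq : Measurable fun p : En n × En n => ENNReal.ofReal ((u p.1 - u p.2) ^ 2) := by fun_prop
  set G : En n × En n → ℝ≥0∞ := fun p =>
    ENNReal.ofReal ((u p.1 - u p.2) ^ 2) * ENNReal.ofReal (nsKer n s p.1 p.2)⁻¹ with hG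
  have hGm : Measurable G := hsq.mul (measurable_nuDensity n s)
  set D := ENNReal.ofReal ((2 * t) ^ ((n : ℝ) + 2 * s)) with hD
  have hex : ∀ k, ∃ y ∈ B k, ∫⁻ x in P k, ENNReal.ofReal ((u y - u x) ^ 2) ≤
      laverage (volume.restrict (B k)) (fun y => ∫⁻ x in P k, ENNReal.ofReal ((u y - u x) ^ 2)) := fun k => by
    refine exists_le_setLAverage ?_ ?_ ?_
    · exact fun h => hm (le_antisymm (h ▸ hBv k) zero_le)
    · exact (measure_mono inter_subset_left |>.trans_lt hb.measure_lt_top).ne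
    · exact (Measurable.lintegral_prod_right' (ν := volume.restrict (P k)) hsq).aemeasurable
  choose y hy hyle using hex
  refine ⟨fun k => u (y k), ?_⟩
  have hpt : ∀ k, ∀ a ∈ B k, ∀ x ∈ P k, ENNReal.ofReal ((u a - u x) ^ 2) ≤ D * G (a, x) := by
    intro k a ha x hx
    rcases eq_or_ne a x with rfl | hax
    · simp
    have hd : dist a x < 2 * t := by
      have h1 := hπe x hx.1
      have h2 : π x = k := hx.2
      rw [h2] at h1
      have h3 : dist a (e k) < t := ha.2
      linarith [dist_triangle_right a x (e k)]
    have hk : 0 < nsKer n s a x := Real.rpow_pos_of_pos (dist_pos.2 hax) _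
    have hk' : nsKer n s a x ≤ (2 * t) ^ ((n : ℝ) + 2 * s) :=
      Real.rpow_le_rpow dist_nonneg hd.le (by positivity)
    rw [hD, hG]
    simp only
    rw [← ENNReal.ofReal_mul (by positivity), ← ENNReal.ofReal_mul (by positivity)]
    apply ENNReal.ofReal_le_ofReal
    rw [mul_left_comm]
    apply le_mul_of_one_le_right (sq_nonneg _)
    rw [← div_eq_mul_inv, one_le_div hk]
    exact hk'
  have hstep : ∀ k, ∫⁻ x in P k, ENNReal.ofReal ((u x - u (y (π x))) ^ 2) ≤
      m⁻¹ * D * ∫⁻ x in P k, ∫⁻ a in Ω, G (a, x) := by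
    intro k
    calc ∫⁻ x in P k, ENNReal.ofReal ((u x - u (y (π x))) ^ 2)
        = ∫⁻ x in P k, ENNReal.ofReal ((u (y k) - u x) ^ 2) := by
          refine setLIntegral_congr_fun (hPm k) fun x hx => ?_
          have h2 : π x = k := hx.2
          simp only [h2]
          congr 1; ring
      _ ≤ laverage (volume.restrict (B k))
            (fun y => ∫⁻ x in P k, ENNReal.ofReal ((u y - u x) ^ 2)) := hyle k
      _ ≤ m⁻¹ * ∫⁻ a in B k, ∫⁻ x in P k, ENNReal.ofReal ((u a - u x) ^ 2) := by
          rw [setLAverage_eq, ENNReal.div_eq_inv_mul]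
          gcongr
          exact hBv k
      _ ≤ m⁻¹ * ∫⁻ a in B k, ∫⁻ x in P k, D * G (a, x) := by
          gcongr 1
          refine setLIntegral_mono' (hBm k) fun a ha => ?_
          exact setLIntegral_mono' (hPm k) fun x hx => hpt k a ha x hx
      _ ≤ m⁻¹ * ∫⁻ a in Ω, ∫⁻ x in P k, D * G (a, x) := by
          gcongr 1
          exact lintegral_mono_set inter_subset_left
      _ = m⁻¹ * ∫⁻ x in P k, ∫⁻ a in Ω, D * G (a, x) := by
          rw [lintegral_lintegral_swap]
          exact ((hGm.const_mul D)).aemeasurable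
      _ = m⁻¹ * D * ∫⁻ x in P k, ∫⁻ a in Ω, G (a, x) := by
          rw [mul_assoc, ← lintegral_const_mul D (Measurable.lintegral_prod_left' hGm)]
          congr 1
          refine lintegral_congr fun x => ?_
          exact lintegral_const_mul D (show Measurable fun a => G (a, x) from hGm.comp (by fun_prop))
  have hunion : Ω = ⋃ k, P k := by
    ext x; simp [hP]
  have hdisj : Pairwise (Function.onFun Disjoint P) := by
    intro i j hij
    rw [Function.onFun, Set.disjoint_left]
    rintro x ⟨-, hxi⟩ ⟨-, hxj⟩
    exact hij (hxi.symm.trans hxj)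
  have hsplit : ∀ f : En n → ℝ≥0∞, ∫⁻ x in Ω, f x = ∑ k, ∫⁻ x in P k, f x := by
    intro f
    conv_lhs => rw [hunion]
    rw [lintegral_iUnion hPm hdisj, tsum_fintype]
  calc ∫⁻ x in Ω, ENNReal.ofReal ((u x - u (y (π x))) ^ 2)
      = ∑ k, ∫⁻ x in P k, ENNReal.ofReal ((u x - u (y (π x))) ^ 2) := hsplit _
    _ ≤ ∑ k, m⁻¹ * D * ∫⁻ x in P k, ∫⁻ a in Ω, G (a, x) := Finset.sum_le_sum fun k _ => hstep k
    _ = m⁻¹ * D * ∫⁻ x in Ω, ∫⁻ a in Ω, G (a, x) := by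
        rw [← Finset.mul_sum, ← hsplit]
    _ = m⁻¹ * D * ∫⁻ p in Ω ×ˢ Ω, G p := by
        rw [Measure.volume_eq_prod, ← Measure.prod_restrict, lintegral_prod_symm' _ hGm]
    _ ≤ m⁻¹ * D * ∫⁻ p in Qset n Ω, G p := by
        gcongr 1
        exact lintegral_mono_set fun p hp => mem_Qset.2 (Or.inl hp.1)
    _ = _ := by rw [lintegral_nuQ _ hsq]

/-! ### The energy space as a Hilbert space -/

/-- The Hilbert space `L²(Ω) × L²(nuQ)`, in which the energy space is realized as a graph. -/
abbrev AmbK (n : ℕ) (s : ℝ) (Ω : Set (En n)) :=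
  WithLp 2 (Lp ℝ 2 (volume.restrict Ω : Measure (En n)) × Lp ℝ 2 (nuQ n s Ω))

/-- The energy space `H^s_{Ω,0}` modulo almost everywhere equality, realized as the set of pairs
`(u|_Ω, u x - u y)`. The norm inherited from `AmbK` is the one of `H^s_{Ω,0}`. -/
def hsGraph (n : ℕ) (s : ℝ) (Ω : Set (En n)) : Submodule ℝ (AmbK n s Ω) where
  carrier := {k | ∃ u : En n → ℝ, Measurable u ∧ k.fst =ᵐ[volume.restrict Ω] u ∧
    k.snd =ᵐ[nuQ n s Ω] fun p => u p.1 - u p.2}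
  zero_mem' := ⟨fun _ => 0, measurable_const, by
    filter_upwards [Lp.coeFn_zero ℝ 2 (volume.restrict Ω)] with x hx using hx, by
    filter_upwards [Lp.coeFn_zero ℝ 2 (nuQ n s Ω)] with x hx
    simpa using hx⟩
  add_mem' := by
    rintro k l ⟨u, hu, h1, h2⟩ ⟨v, hv, h3, h4⟩
    refine ⟨fun x => u x + v x, hu.add hv, ?_, ?_⟩
    · filter_upwards [Lp.coeFn_add k.fst l.fst, h1, h3] with x hx h h'
      rw [WithLp.add_fst, hx, Pi.add_apply, h, h']
    · filter_upwards [Lp.coeFn_add k.snd l.snd, h2, h4] with x hx h h'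
      rw [WithLp.add_snd, hx, Pi.add_apply, h, h']
      ring
  smul_mem' := by
    rintro c k ⟨u, hu, h1, h2⟩
    refine ⟨fun x => c * u x, hu.const_mul c, ?_, ?_⟩
    · filter_upwards [Lp.coeFn_smul c k.fst, h1] with x hx h
      rw [WithLp.smul_fst, hx, Pi.smul_apply, h, smul_eq_mul]
    · filter_upwards [Lp.coeFn_smul c k.snd, h2] with x hx h
      rw [WithLp.smul_snd, hx, Pi.smul_apply, h, smul_eq_mul]
      ring

/-- Completeness of the energy space. If `(u_j|_Ω, u_j x - u_j y)` converges, then along a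
subsequence `u_j` converges a.e. in `Ω`, and `u_j x - u_j y` converges for a.e. `(x, y) ∈ Q(Ω)`.
For a.e. `x` outside `Ω`, adding the values at one suitable `y ∈ Ω` shows that `u_j x` converges
too, and the pointwise limit represents the limit pair. -/
theorem isClosed_hsGraph {n : ℕ} {s : ℝ} {Ω : Set (En n)} (hop : IsOpen Ω) (hne : Ω.Nonempty) :
    IsClosed (hsGraph n s Ω : Set (AmbK n s Ω)) := by
  apply IsSeqClosed.isClosed
  intro k l hk hl
  have hfst : Tendsto (fun j => (k j).fst) atTop (𝓝 l.fst) :=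
    ((WithLp.prod_continuous_ofLp 2 _ _).fst.tendsto l).comp hl
  have hsnd : Tendsto (fun j => (k j).snd) atTop (𝓝 l.snd) :=
    ((WithLp.prod_continuous_ofLp 2 _ _).snd.tendsto l).comp hl
  obtain ⟨φ, hφ, h1⟩ := (tendstoInMeasure_of_tendsto_Lp hfst).exists_seq_tendsto_ae
  obtain ⟨ψ, hψ, h2⟩ :=
    (tendstoInMeasure_of_tendsto_Lp (hsnd.comp hφ.tendsto_atTop)).exists_seq_tendsto_ae
  choose u hu hu1 hu2 using hk
  set w : ℕ → En n → ℝ := fun j => u (φ (ψ j)) with hw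
  have hw1 : ∀ᵐ x ∂(volume.restrict Ω), Tendsto (fun j => w j x) atTop (𝓝 (l.fst x)) := by
    filter_upwards [h1, ae_all_iff.2 hu1] with x hx hux
    refine (hx.comp hψ.tendsto_atTop).congr fun j => ?_
    simp only [Function.comp, hw, hux]
  have hw2 : ∀ᵐ p ∂(nuQ n s Ω), Tendsto (fun j => w j p.1 - w j p.2) atTop (𝓝 (l.snd p)) := by
    filter_upwards [h2, ae_all_iff.2 hu2] with x hx hux
    refine hx.congr fun j => ?_
    simp only [Function.comp, hw, hux]
  have hvol : volume Ω ≠ 0 := (hop.measure_pos volume hne).ne'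
  have hout : ∀ᵐ x ∂(volume.restrict Ωᶜ), ∃ a, Tendsto (fun j => w j x) atTop (𝓝 a) := by
    have h3 := ae_nuQ_ne hw2
    have h4 : ∀ᵐ p ∂(((volume : Measure (En n)).restrict Ωᶜ).prod (volume.restrict Ω)),
        p.1 ≠ p.2 → Tendsto (fun j => w j p.1 - w j p.2) atTop (𝓝 (l.snd p)) := by
      rw [Measure.prod_restrict, ← Measure.volume_eq_prod]
      exact ae_restrict_of_ae_restrict_of_subset (fun p hp => mem_Qset.2 (Or.inr hp.2)) h3
    have h5 := Measure.ae_ae_of_ae_prod h4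
    filter_upwards [h5, ae_restrict_mem hop.measurableSet.compl] with x hx hxΩ
    have : (ae (volume.restrict Ω)).NeBot := by
      rw [ae_neBot]; simpa using hvol
    obtain ⟨y, hy1, hy2, hy3⟩ :=
      (hx.and (hw1.and (ae_restrict_mem hop.measurableSet))).exists
    have hxy : x ≠ y := fun h => hxΩ (h ▸ hy3)
    refine ⟨l.snd (x, y) + l.fst y, ((hy1 hxy).add hy2).congr fun j => ?_⟩
    simp
  have hall : ∀ᵐ x ∂(volume : Measure (En n)), ∃ a, Tendsto (fun j => w j x) atTop (𝓝 a) := by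
    rw [← Measure.restrict_add_restrict_compl (μ := volume) hop.measurableSet, ae_add_measure_iff]
    exact ⟨hw1.mono fun x hx => ⟨_, hx⟩, hout⟩
  obtain ⟨v, hv, hvlim⟩ :=
    measurable_limit_of_tendsto_metrizable_ae (fun j => (hu (φ (ψ j))).aemeasurable) hall
  refine ⟨v, hv, ?_, ?_⟩
  · filter_upwards [hw1, ae_restrict_of_ae hvlim] with x hx hx'
    exact tendsto_nhds_unique hx hx'
  · have hf := Measure.quasiMeasurePreserving_fst (μ := (volume : Measure (En n)))
      (ν := (volume : Measure (En n)))
    have hs := Measure.quasiMeasurePreserving_snd (μ := (volume : Measure (En n)))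
      (ν := (volume : Measure (En n)))
    filter_upwards [hw2, nuQ_absolutelyContinuous.ae_le (hf.ae hvlim),
      nuQ_absolutelyContinuous.ae_le (hs.ae hvlim)] with p hp hp1 hp2
    exact tendsto_nhds_unique hp (hp1.sub hp2)

/-- The restriction `u ↦ u|_Ω` from the energy space to `L²(Ω)`. -/
noncomputable def restrMap (n : ℕ) (s : ℝ) (Ω : Set (En n)) :
    hsGraph n s Ω →L[ℝ] Lp ℝ 2 (volume.restrict Ω : Measure (En n)) :=
  (WithLp.fstL 2 ℝ _ _).comp (hsGraph n s Ω).subtypeL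

theorem norm_sq_Lp {α : Type*} [MeasurableSpace α] {μ : Measure α} (f : Lp ℝ 2 μ) {u : α → ℝ}
    (hfu : f =ᵐ[μ] u) : ENNReal.ofReal (‖f‖ ^ 2) = ∫⁻ x, ENNReal.ofReal (u x ^ 2) ∂μ := by
  have h0 : ENNReal.ofReal (‖f‖ ^ 2) = eLpNorm f 2 μ ^ 2 := by
    rw [ENNReal.ofReal_pow (norm_nonneg _), Lp.norm_def, ENNReal.ofReal_toReal (Lp.eLpNorm_ne_top f)]
  rw [h0, eLpNorm_congr_ae hfu]
  have := eLpNorm_nnreal_pow_eq_lintegral (f := u) (μ := μ) (p := 2) (by norm_num)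
  have h2 : ((2 : ℝ≥0) : ℝ≥0∞) = 2 := by norm_num
  rw [h2] at this
  have h3 : ((2 : ℝ≥0) : ℝ) = (2 : ℕ) := by norm_num
  rw [h3, ENNReal.rpow_natCast] at this
  rw [this]
  refine lintegral_congr fun x => ?_
  rw [ENNReal.rpow_natCast, Real.enorm_eq_ofReal_abs, ← ENNReal.ofReal_pow (abs_nonneg _), sq_abs]

/-! ### Compactness of the restriction map -/

/-- An operator whose values are approximated, to within `ε ‖w‖`, by elements of a
finite-dimensional subspace is a norm limit of finite-rank operators, hence compact. -/
theorem isCompactOperator_of_finite_approx {W E : Type*} [NormedAddCommGroup W]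
    [NormedSpace ℝ W] [NormedAddCommGroup E] [InnerProductSpace ℝ E] [CompleteSpace E]
    (T : W →L[ℝ] E)
    (h : ∀ ε > 0, ∃ F : Submodule ℝ E, FiniteDimensional ℝ F ∧
      ∀ w, ∃ g ∈ F, ‖T w - g‖ ≤ ε * ‖w‖) : IsCompactOperator T := by
  have hcl : IsClosed {f : W →L[ℝ] E | IsCompactOperator f} := isClosed_setOfPred_isCompactOperator
  have : T ∈ closure {f : W →L[ℝ] E | IsCompactOperator f} := by
    rw [Metric.mem_closure_iff]
    intro ε hε
    obtain ⟨F, hF, hTF⟩ := h (ε / 2) (by positivity)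
    refine ⟨F.starProjection.comp T, ?_, ?_⟩
    · have h1 : IsCompactOperator (F.orthogonalProjectionOnto.comp T) :=
        isCompactOperator_of_locallyCompactSpace_dom (F.orthogonalProjectionOnto.comp T)
      exact h1.clm_comp F.subtypeL
    · rw [dist_eq_norm]
      refine lt_of_le_of_lt ?_ (half_lt_self hε)
      refine ContinuousLinearMap.opNorm_le_bound _ (by positivity) fun w => ?_
      obtain ⟨g, hg, hgw⟩ := hTF w
      refine le_trans ?_ hgw
      have hmin := F.starProjection_minimal (T w)
      rw [sub_apply, ContinuousLinearMap.comp_apply, hmin]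
      exact ciInf_le ⟨0, by rintro _ ⟨y, rfl⟩; exact norm_nonneg _⟩ (⟨g, hg⟩ : F)
  rwa [hcl.closure_eq] at this

theorem fst_snd_norm_sq {n : ℕ} {s : ℝ} {Ω : Set (En n)} (w : AmbK n s Ω) :
    ‖w‖ ^ 2 = ‖w.fst‖ ^ 2 + ‖w.snd‖ ^ 2 := WithLp.prod_norm_sq_eq_of_L2 w

/-- Compact embedding of the energy space into `L²(Ω)`. By the corkscrew condition the volume in
`approx_estimate` may be taken proportional to `t ^ n`, so that the squared error of approximation
by piecewise constants is at most `C t^{2s}` times the energy, which is small for small `t`. -/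
theorem isCompactOperator_restrMap {n : ℕ} (hn : 0 < n) {s : ℝ} (hs : 0 < s) {Ω : Set (En n)}
    (hΩ : IsLipschitzDomain n Ω) : IsCompactOperator (restrMap n s Ω) := by
  obtain ⟨κ, hκ, ρ, hρ, hcork⟩ := corkscrew hn hΩ
  obtain ⟨hop, hb, hne, -⟩ := hΩ
  have hfinm : IsFiniteMeasure (volume.restrict Ω : Measure (En n)) :=
    ⟨by simpa using hb.measure_lt_top⟩
  have hnon : Nonempty (Fin n) := ⟨⟨0, hn⟩⟩
  set b : ℝ := (volume (Metric.ball (0 : En n) 1)).toReal with hbdef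
  have hbpos : 0 < b := ENNReal.toReal_pos (Metric.measure_ball_pos _ _ one_pos).ne'
    measure_ball_lt_top.ne
  have hvol : ∀ (y : En n) (r : ℝ), 0 ≤ r → volume (Metric.ball y r) = ENNReal.ofReal (r ^ n * b) := by
    intro y r hr
    rw [Measure.addHaar_ball _ _ hr, ENNReal.ofReal_mul (by positivity), hbdef,
      ENNReal.ofReal_toReal measure_ball_lt_top.ne]
    simp
  set C : ℝ := 2 ^ ((n : ℝ) + 2 * s) / (κ ^ n * b) with hC
  have hCpos : 0 < C := by positivity
  apply isCompactOperator_of_finite_approx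
  intro ε hε
  obtain ⟨t, ht, htρ, htε⟩ : ∃ t : ℝ, 0 < t ∧ t ≤ ρ ∧ C * t ^ (2 * s) ≤ ε ^ 2 := by
    have hlim : Tendsto (fun t : ℝ => C * t ^ (2 * s)) (𝓝[>] 0) (𝓝 0) := by
      have h1 : Tendsto (fun t : ℝ => C * t ^ (2 * s)) (𝓝 0) (𝓝 (C * 0 ^ (2 * s))) :=
        ((Real.continuousAt_rpow_const 0 (2 * s) (Or.inr (by positivity))).tendsto).const_mul C
      rw [Real.zero_rpow (by positivity), mul_zero] at h1
      exact h1.mono_left nhdsWithin_le_nhds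
    have h2 : ∀ᶠ t in 𝓝[>] (0 : ℝ), C * t ^ (2 * s) < ε ^ 2 :=
      hlim.eventually_lt_const (by positivity)
    have h3 : ∀ᶠ t in 𝓝[>] (0 : ℝ), t ∈ Ioo 0 ρ := Ioo_mem_nhdsGT hρ
    obtain ⟨t, h4, h5⟩ := (h2.and h3).exists
    exact ⟨t, h5.1, h5.2.le, h4.le⟩
  have hm0 : ENNReal.ofReal ((κ * t) ^ n * b) ≠ 0 := by
    rw [Ne, ENNReal.ofReal_eq_zero, not_le]; positivity
  obtain ⟨N, π, hπ, hest⟩ := approx_estimate hs hop hb hne hm0 ht (fun x hx => by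
    obtain ⟨y, hy⟩ := hcork x hx t ht htρ
    rw [← hvol y (κ * t) (by positivity)]
    exact measure_mono hy)
  have hconst : (ENNReal.ofReal ((κ * t) ^ n * b))⁻¹ *
      ENNReal.ofReal ((2 * t) ^ ((n : ℝ) + 2 * s)) = ENNReal.ofReal (C * t ^ (2 * s)) := by
    rw [← ENNReal.ofReal_inv_of_pos (by positivity), ← ENNReal.ofReal_mul (by positivity)]
    congr 1
    rw [Real.mul_rpow (by norm_num) ht.le, Real.rpow_add ht, Real.rpow_natCast, hC, mul_pow]
    field_simp
  have hmem : ∀ c : Fin (N + 1) → ℝ, MemLp (fun x => c (π x)) 2 (volume.restrict Ω) := by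
    intro c
    have hcm : Measurable fun x => c (π x) := (measurable_of_finite c).comp hπ
    refine MemLp.of_bound hcm.aestronglyMeasurable (∑ k, ‖c k‖) (Eventually.of_forall fun x => ?_)
    exact Finset.single_le_sum (f := fun k => ‖c k‖) (fun k _ => norm_nonneg _) (Finset.mem_univ (π x))
  let L : (Fin (N + 1) → ℝ) →ₗ[ℝ] Lp ℝ 2 (volume.restrict Ω : Measure (En n)) :=
    { toFun := fun c => (hmem c).toLp _
      map_add' := fun c d => MemLp.toLp_add (hmem c) (hmem d)
      map_smul' := fun a c => MemLp.toLp_const_smul a (hmem c) }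
  refine ⟨LinearMap.range L, inferInstance, ?_⟩
  rintro ⟨w, u, hu, hu1, hu2⟩
  obtain ⟨c, hc⟩ := hest u hu
  refine ⟨L c, ⟨c, rfl⟩, ?_⟩
  have h1 : (w.fst - L c : Lp ℝ 2 (volume.restrict Ω : Measure (En n)))
      =ᵐ[volume.restrict Ω] fun x => u x - c (π x) := by
    filter_upwards [Lp.coeFn_sub w.fst (L c), hu1, (hmem c).coeFn_toLp] with x hx h h'
    rw [hx, Pi.sub_apply, h]
    congr 1
  rw [← norm_sq_Lp _ h1, hconst, ← norm_sq_Lp _ hu2, ← ENNReal.ofReal_mul (by positivity),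
    ENNReal.ofReal_le_ofReal_iff (by positivity)] at hc
  have h2 : ‖w.fst - L c‖ ^ 2 ≤ (ε * ‖w‖) ^ 2 := by
    have h3 := fst_snd_norm_sq w
    calc ‖w.fst - L c‖ ^ 2 ≤ C * t ^ (2 * s) * ‖w.snd‖ ^ 2 := hc
      _ ≤ ε ^ 2 * ‖w‖ ^ 2 := by
        exact mul_le_mul htε (by rw [h3]; linarith [sq_nonneg ‖w.fst‖]) (sq_nonneg _)
          (by positivity)
      _ = _ := by ring
  exact abs_le_of_sq_le_sq' h2 (by positivity) |>.2

/-! ### Density of the range, dimension, and functions of zero energy -/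

/-- The function `min (A |z|²) B / |z|^{n + 2s}` is integrable on `ℝ^n`: in polar coordinates it
behaves like `r^{1 - 2s}` at `0` and like `r^{-1 - 2s}` at infinity. -/
theorem integrable_profile {n : ℕ} (hn : 0 < n) {s : ℝ} (hs : s ∈ Set.Ioo (0 : ℝ) 1) {A B : ℝ}
    (hA : 0 ≤ A) (hB : 0 ≤ B) :
    Integrable fun z : En n => min (A * ‖z‖ ^ 2) B / ‖z‖ ^ ((n : ℝ) + 2 * s) := by
  have hnon : Nonempty (Fin n) := ⟨⟨0, hn⟩⟩
  have key := integrable_fun_norm_addHaar (E := En n) volume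
    (f := fun r : ℝ => min (A * r ^ 2) B / r ^ ((n : ℝ) + 2 * s))
  rw [key]
  have hmeas : Measurable fun y : ℝ => y ^ (Module.finrank ℝ (En n) - 1) •
      (min (A * y ^ 2) B / y ^ ((n : ℝ) + 2 * s)) := by
    have : Measurable fun y : ℝ => y ^ ((n : ℝ) + 2 * s) := measurable_id.pow_const _
    fun_prop
  have hpow : ∀ y : ℝ, 0 < y → y ^ (Module.finrank ℝ (En n) - 1) = y ^ ((n : ℝ) - 1) := by
    intro y hy
    rw [finrank_euclideanSpace_fin, ← Real.rpow_natCast, Nat.cast_sub hn, Nat.cast_one]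
  have hnn : ∀ y : ℝ, 0 < y → 0 ≤ y ^ (Module.finrank ℝ (En n) - 1) •
      (min (A * y ^ 2) B / y ^ ((n : ℝ) + 2 * s)) := by
    intro y hy
    have : 0 ≤ min (A * y ^ 2) B := le_min (by positivity) hB
    rw [smul_eq_mul]; positivity
  -- The piece near the origin is bounded through `A r²`, the piece at infinity through `B`.
  rw [← Ioc_union_Ioi_eq_Ioi (zero_le_one (α := ℝ)), integrableOn_union]
  constructor
  · have h1 : IntegrableOn (fun y : ℝ => A * y ^ (1 - 2 * s)) (Ioc 0 1) := by
      have := intervalIntegral.intervalIntegrable_rpow' (a := 0) (b := 1) (r := 1 - 2 * s)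
        (by linarith [hs.2])
      rw [intervalIntegrable_iff_integrableOn_Ioc_of_le zero_le_one] at this
      exact this.const_mul A
    refine h1.mono' hmeas.aestronglyMeasurable ?_
    filter_upwards [ae_restrict_mem measurableSet_Ioc] with y hy
    rw [Real.norm_of_nonneg (hnn y hy.1), hpow y hy.1, smul_eq_mul]
    have hy0 := hy.1
    calc y ^ ((n : ℝ) - 1) * (min (A * y ^ 2) B / y ^ ((n : ℝ) + 2 * s))
        ≤ y ^ ((n : ℝ) - 1) * ((A * y ^ 2) / y ^ ((n : ℝ) + 2 * s)) := by
          gcongr; exact min_le_left _ _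
      _ = A * (y ^ ((n : ℝ) - 1) * y ^ (2 : ℝ) / y ^ ((n : ℝ) + 2 * s)) := by
          rw [Real.rpow_two]; ring
      _ = A * y ^ (1 - 2 * s) := by
          rw [← Real.rpow_add hy0, ← Real.rpow_sub hy0]; congr 2; ring
  · have h1 : IntegrableOn (fun y : ℝ => B * y ^ (-1 - 2 * s)) (Ioi 1) :=
      (integrableOn_Ioi_rpow_of_lt (by linarith [hs.1]) one_pos).const_mul B
    refine h1.mono' hmeas.aestronglyMeasurable ?_
    filter_upwards [ae_restrict_mem measurableSet_Ioi] with y hy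
    have hy0 : 0 < y := one_pos.trans hy
    rw [Real.norm_of_nonneg (hnn y hy0), hpow y hy0, smul_eq_mul]
    calc y ^ ((n : ℝ) - 1) * (min (A * y ^ 2) B / y ^ ((n : ℝ) + 2 * s))
        ≤ y ^ ((n : ℝ) - 1) * (B / y ^ ((n : ℝ) + 2 * s)) := by
          gcongr; exact min_le_right _ _
      _ = B * (y ^ ((n : ℝ) - 1) / y ^ ((n : ℝ) + 2 * s)) := by ring
      _ = B * y ^ (-1 - 2 * s) := by
          rw [← Real.rpow_sub hy0]; congr 2; ring

/-- Bounded Lipschitz functions have finite energy over a bounded set. -/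
theorem energy_finite {n : ℕ} (hn : 0 < n) {s : ℝ} (hs : s ∈ Set.Ioo (0 : ℝ) 1)
    {Ω : Set (En n)} (hb : IsBounded Ω) {u : En n → ℝ} {K : ℝ≥0}
    (hK : LipschitzWith K u) {M : ℝ} (hM : ∀ x, |u x| ≤ M) :
    IntegrableOn (fun p : En n × En n => (u p.1 - u p.2) ^ 2 / nsKer n s p.1 p.2)
      (Qset n Ω) := by
  have hu : Measurable u := hK.continuous.measurable
  have hint := integrable_profile hn hs (A := (K : ℝ) ^ 2) (B := (2 * M) ^ 2) (by positivity)
    (by positivity)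
  set Φ : En n → ℝ := fun z => min ((K : ℝ) ^ 2 * ‖z‖ ^ 2) ((2 * M) ^ 2) / ‖z‖ ^ ((n : ℝ) + 2 * s)
    with hΦ
  have hΦm : Measurable Φ := by
    have : Measurable fun z : En n => ‖z‖ ^ ((n : ℝ) + 2 * s) := measurable_norm.pow_const _
    fun_prop
  have hI : ∫⁻ z, ENNReal.ofReal (Φ z) < ⊤ := hint.lintegral_lt_top
  have hF : Measurable fun p : En n × En n => ENNReal.ofReal (Φ (p.1 - p.2)) :=
    (hΦm.comp (measurable_fst.sub measurable_snd)).ennreal_ofReal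
  have hpt : ∀ p : En n × En n, (u p.1 - u p.2) ^ 2 / nsKer n s p.1 p.2 ≤ Φ (p.1 - p.2) := by
    intro p
    simp only [hΦ, nsKer, dist_eq_norm]
    gcongr
    refine le_min ?_ ?_
    · rw [← mul_pow, ← sq_abs]
      gcongr
      have := hK.dist_le_mul p.1 p.2
      rwa [Real.dist_eq, dist_eq_norm] at this
    · rw [← sq_abs]
      gcongr
      have h1 := abs_le.mp (hM p.1)
      have h2 := abs_le.mp (hM p.2)
      exact abs_le.mpr ⟨by linarith, by linarith⟩
  have hmeas : Measurable fun p : En n × En n => (u p.1 - u p.2) ^ 2 / nsKer n s p.1 p.2 :=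
    (((hu.comp measurable_fst).sub (hu.comp measurable_snd)).pow_const 2).div (measurable_nsKer n s)
  refine ⟨hmeas.aestronglyMeasurable, ?_⟩
  rw [hasFiniteIntegral_iff_ofReal (Eventually.of_forall fun p =>
    div_nonneg (sq_nonneg _) (nsKer_nonneg n s _ _))]
  have hsub : Qset n Ω ⊆ (Ω ×ˢ univ) ∪ (univ ×ˢ Ω) := fun p hp => by
    rcases mem_Qset.1 hp with h | h
    · exact Or.inl ⟨h, trivial⟩
    · exact Or.inr ⟨trivial, h⟩
  calc ∫⁻ p in Qset n Ω, ENNReal.ofReal ((u p.1 - u p.2) ^ 2 / nsKer n s p.1 p.2)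
      ≤ ∫⁻ p in Qset n Ω, ENNReal.ofReal (Φ (p.1 - p.2)) :=
        lintegral_mono fun p => ENNReal.ofReal_le_ofReal (hpt p)
    _ ≤ ∫⁻ p in (Ω ×ˢ univ) ∪ (univ ×ˢ Ω), ENNReal.ofReal (Φ (p.1 - p.2)) :=
        lintegral_mono_set hsub
    _ ≤ (∫⁻ p in Ω ×ˢ univ, ENNReal.ofReal (Φ (p.1 - p.2))) +
        ∫⁻ p in univ ×ˢ Ω, ENNReal.ofReal (Φ (p.1 - p.2)) := lintegral_union_le _ _ _
    _ = (∫⁻ z, ENNReal.ofReal (Φ z)) * volume Ω + (∫⁻ z, ENNReal.ofReal (Φ z)) * volume Ω := by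
        rw [Measure.volume_eq_prod, ← Measure.prod_restrict, ← Measure.prod_restrict,
          Measure.restrict_univ, lintegral_prod _ hF.aemeasurable, lintegral_prod_symm' _ hF]
        simp only
        congr 1
        · simp_rw [lintegral_sub_left_eq_self (fun z => ENNReal.ofReal (Φ z))]
          rw [lintegral_const, Measure.restrict_apply_univ]
        · simp_rw [lintegral_sub_right_eq_self (fun z => ENNReal.ofReal (Φ z))]
          rw [lintegral_const, Measure.restrict_apply_univ]
    _ < ⊤ := by
        have := ENNReal.mul_lt_top hI (hb.measure_lt_top (μ := volume))
        exact ENNReal.add_lt_top.2 ⟨this, this⟩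

/-- A measurable function with finite `H^s_{Ω,0}` norm defines an element of the energy space. -/
theorem exists_graph {n : ℕ} {s : ℝ} {Ω : Set (En n)} {v : En n → ℝ} (hv : Measurable v)
    (h1 : IntegrableOn (fun x => v x ^ 2) Ω)
    (h2 : IntegrableOn (fun p : En n × En n => (v p.1 - v p.2) ^ 2 / nsKer n s p.1 p.2)
      (Qset n Ω)) :
    ∃ w : hsGraph n s Ω, (w : AmbK n s Ω).fst =ᵐ[volume.restrict Ω] v ∧
      (w : AmbK n s Ω).snd =ᵐ[nuQ n s Ω] fun p => v p.1 - v p.2 := by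
  have m1 : MemLp v 2 (volume.restrict Ω) :=
    (memLp_two_iff_integrable_sq hv.aestronglyMeasurable).2 h1
  have m2 : MemLp (fun p : En n × En n => v p.1 - v p.2) 2 (nuQ n s Ω) :=
    (memLp_two_iff_integrable_sq
      ((hv.comp measurable_fst).sub (hv.comp measurable_snd)).aestronglyMeasurable).2
      ((integrable_nuQ _).2 h2)
  exact ⟨⟨WithLp.toLp 2 (m1.toLp v, m2.toLp _), v, hv, m1.coeFn_toLp, m2.coeFn_toLp⟩,
    m1.coeFn_toLp, m2.coeFn_toLp⟩

theorem inner_Lp {α : Type*} [MeasurableSpace α] {μ : Measure α} {f g : Lp ℝ 2 μ} {u v : α → ℝ}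
    (hf : f =ᵐ[μ] u) (hg : g =ᵐ[μ] v) : inner ℝ f g = ∫ x, u x * v x ∂μ := by
  rw [L2.inner_def]
  refine integral_congr_ae ?_
  filter_upwards [hf, hg] with x h1 h2
  simp [h1, h2, mul_comm]

/-- The restriction map has dense range in `L²(Ω)`, because its range contains the smooth compactly
supported functions. -/
theorem eq_zero_of_orthogonal_range {n : ℕ} (hn : 0 < n) {s : ℝ} (hs : s ∈ Set.Ioo (0 : ℝ) 1)
    {Ω : Set (En n)} (hb : IsBounded Ω)
    (f : Lp ℝ 2 (volume.restrict Ω : Measure (En n)))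
    (hf : ∀ w, inner ℝ f (restrMap n s Ω w) = 0) : f = 0 := by
  have hfinm : IsFiniteMeasure (volume.restrict Ω : Measure (En n)) :=
    ⟨by simpa using hb.measure_lt_top⟩
  have hfi : Integrable f (volume.restrict Ω) := (Lp.memLp f).integrable (by norm_num)
  have h0 : ∀ᵐ x ∂(volume.restrict Ω), f x = 0 := by
    refine ae_eq_zero_of_integral_contDiff_smul_eq_zero hfi.locallyIntegrable fun g hg hgc => ?_
    obtain ⟨K, hK⟩ := hg.lipschitzWith_of_hasCompactSupport hgc (by simp)
    obtain ⟨M, hM⟩ := hgc.exists_bound_of_continuous hg.continuous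
    have hgL : IntegrableOn (fun x => g x ^ 2) Ω :=
      Integrable.of_bound (hg.continuous.pow 2).aestronglyMeasurable (M ^ 2)
        (Eventually.of_forall fun x => by
          rw [norm_pow]; exact pow_le_pow_left₀ (norm_nonneg _) (hM x) 2)
    obtain ⟨w, hw, -⟩ := exists_graph hg.continuous.measurable hgL
      (energy_finite hn hs hb hK (M := M) hM)
    have := hf w
    rw [inner_Lp (Filter.EventuallyEq.refl _ _) (show restrMap n s Ω w =ᵐ[_] g from hw)] at this
    simpa [mul_comm] using this
  exact (Lp.eq_zero_iff_ae_eq_zero).2 h0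

/-- Indicators of infinitely many disjoint nonempty open subsets of `Ω` are linearly independent. -/
theorem not_finiteDimensional_L2 {n : ℕ} (hn : 0 < n) {Ω : Set (En n)} (hop : IsOpen Ω)
    (hb : IsBounded Ω) (hne : Ω.Nonempty) :
    ¬ FiniteDimensional ℝ (Lp ℝ 2 (volume.restrict Ω : Measure (En n))) := by
  intro hfd
  have hfinm : IsFiniteMeasure (volume.restrict Ω : Measure (En n)) :=
    ⟨by simpa using hb.measure_lt_top⟩
  have hnon : Nonempty (Fin n) := ⟨⟨0, hn⟩⟩
  have hinf : Infinite Ω := by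
    obtain ⟨x, hx⟩ := hne
    exact (infinite_of_mem_nhds x (hop.mem_nhds hx)).to_subtype
  obtain ⟨V, hVinf, hVop, hVd⟩ := exists_seq_infinite_isOpen_pairwise_disjoint Ω
  let A : ℕ → Set (En n) := fun k => Subtype.val '' V k
  have hAop : ∀ k, IsOpen (A k) := fun k => hop.isOpenMap_subtype_val _ (hVop k)
  have hAsub : ∀ k, A k ⊆ Ω := fun k => by rintro _ ⟨x, -, rfl⟩; exact x.2
  have hAne : ∀ k, (A k).Nonempty := fun k => (hVinf k).nonempty.image _
  have hAd : ∀ i j, i ≠ j → Disjoint (A i) (A j) := fun i j hij =>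
    (Set.disjoint_image_iff Subtype.val_injective).2 (hVd hij)
  have hmem : ∀ k, MemLp ((A k).indicator fun _ => (1 : ℝ)) 2 (volume.restrict Ω) := fun k =>
    memLp_indicator_const 2 (hAop k).measurableSet 1 (Or.inr (measure_ne_top _ _))
  have hli : LinearIndependent ℝ fun k => (hmem k).toLp _ := by
    refine linearIndependent_of_ne_zero_of_inner_eq_zero ?_ ?_
    · intro k h
      have h2 : inner ℝ ((hmem k).toLp _) ((hmem k).toLp _) = (0 : ℝ) := by rw [h]; simp
      rw [inner_Lp (hmem k).coeFn_toLp (hmem k).coeFn_toLp] at h2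
      have h3 : ∀ x, (A k).indicator (fun _ => (1 : ℝ)) x * (A k).indicator (fun _ => (1 : ℝ)) x =
          (A k).indicator (fun _ => (1 : ℝ)) x := fun x => by
        by_cases hx : x ∈ A k <;> simp [hx]
      simp_rw [h3] at h2
      rw [integral_indicator (hAop k).measurableSet, setIntegral_const,
        Measure.real, Measure.restrict_apply (hAop k).measurableSet,
        inter_eq_self_of_subset_left (hAsub k), smul_eq_mul, mul_one] at h2
      have h4 := (hAop k).measure_pos volume (hAne k)
      exact (ENNReal.toReal_pos h4.ne'
        ((measure_mono (hAsub k)).trans_lt hb.measure_lt_top).ne).ne' h2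
    · intro i j hij
      rw [inner_Lp (hmem i).coeFn_toLp (hmem j).coeFn_toLp]
      refine integral_eq_zero_of_ae (Eventually.of_forall fun x => ?_)
      by_cases hx : x ∈ A i
      · simp [Set.disjoint_left.1 (hAd i j hij) hx]
      · simp [hx]
  have := hli.finite
  exact not_finite ℕ

theorem cns_pos {n : ℕ} {s : ℝ} (hs : s ∈ Set.Ioo (0 : ℝ) 1) : 0 < cns n s := by
  have h1 : Real.Gamma (-s) ≠ 0 := by
    refine Real.Gamma_ne_zero fun m h => ?_
    have h2 : s = m := by linarith
    rcases Nat.eq_zero_or_pos m with h3 | h3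
    · subst h3; simp at h2; linarith [hs.1]
    · have : (1 : ℝ) ≤ m := by exact_mod_cast h3
      linarith [hs.2]
  have h2 : 0 < Real.Gamma ((n : ℝ) / 2 + s) := Real.Gamma_pos_of_pos (by have := hs.1; positivity)
  have h3 : 0 < |Real.Gamma (-s)| := abs_pos.2 h1
  have := Real.pi_pos
  unfold cns
  positivity

/-- Functions of zero energy are constant almost everywhere on `Ω`; connectedness of `Ω` plays no
role, since the form is nonlocal. -/
theorem ae_const_of_snd_eq_zero {n : ℕ} (hn : 0 < n) {s : ℝ} {Ω : Set (En n)} (hop : IsOpen Ω)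
    (hne : Ω.Nonempty) {u : En n → ℝ} (h : ∀ᵐ p ∂(nuQ n s Ω), u p.1 - u p.2 = 0) :
    ∃ a : ℝ, ∀ᵐ x ∂(volume.restrict Ω), u x = a := by
  have hnon : Nonempty (Fin n) := ⟨⟨0, hn⟩⟩
  have h3 := ae_nuQ_ne h
  have h4 : ∀ᵐ p ∂(((volume : Measure (En n)).restrict Ω).prod (volume.restrict Ω)),
      p.1 ≠ p.2 → u p.1 - u p.2 = 0 := by
    rw [Measure.prod_restrict, ← Measure.volume_eq_prod]
    exact ae_restrict_of_ae_restrict_of_subset (fun p hp => mem_Qset.2 (Or.inr hp.2)) h3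
  have : (ae (volume.restrict Ω)).NeBot := by
    rw [ae_neBot]; simpa using (hop.measure_pos volume hne).ne'
  obtain ⟨x, hx⟩ := (Measure.ae_ae_of_ae_prod h4).exists
  refine ⟨u x, ?_⟩
  have hx' : ∀ᵐ y ∂((volume : Measure (En n)).restrict Ω), y ≠ x :=
    ae_restrict_of_ae (by simp [ae_iff])
  filter_upwards [hx, hx'] with y hy hyx
  linarith [hy hyx.symm]

/-! ### Neumann eigenvalues -/

-- STATEMENT 7
theorem neumann_eigenvalues (n : ℕ) (hn : 0 < n) (s : ℝ) (hs : s ∈ Set.Ioo (0 : ℝ) 1)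
    (Ω : Set (En n)) (hΩ : IsLipschitzDomain n Ω) :
    ∃ (lam : ℕ → ℝ) (U : ℕ → En n → ℝ),
      lam 0 = 0 ∧ lam 0 < lam 1 ∧ Monotone lam ∧
      (∀ i, IsWeakSol n s Ω (fun x => lam i * U i x) (fun _ => 0) (U i)) ∧
      (∀ i j, i ≠ j → ∫ x in Ω, U i x * U j x = 0) ∧
      (∀ i, (∫ x in Ω, U i x ^ 2) ≠ 0) ∧
      (∀ v : En n → ℝ, Measurable v → IntegrableOn (fun x => v x ^ 2) Ω →
        (∀ i, ∫ x in Ω, v x * U i x = 0) →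
        v =ᵐ[volume.restrict Ω] fun _ => (0 : ℝ)) := by
  have hop := hΩ.1
  have hb := hΩ.2.1
  have hne := hΩ.2.2.1
  have hfinm : IsFiniteMeasure (volume.restrict Ω : Measure (En n)) :=
    ⟨by simpa using hb.measure_lt_top⟩
  have hcomp : CompleteSpace (hsGraph n s Ω) := (isClosed_hsGraph hop hne).completeSpace_coe
  set T : hsGraph n s Ω →L[ℝ] Lp ℝ 2 (volume.restrict Ω : Measure (En n)) := restrMap n s Ω with hT
  have hTc : IsCompactOperator T := isCompactOperator_restrMap hn hs.1 hΩ
  obtain ⟨μ, e, w, he, hTwi, hwv, hanti, hμ, htot⟩ :=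
    exists_singular_seq (not_finiteDimensional_L2 hn hop hb hne) T hTc
      (eq_zero_of_orthogonal_range hn hs hb)
  have hTw : ∀ i, (w i : AmbK n s Ω).fst = μ i • e i := hTwi
  -- The energy inner product `⟪w i, v⟫` equals `⟪e i, T v⟫`, that is `(μ i)⁻¹ ⟪T (w i), T v⟫`;
  -- removing the `L²(Ω)` part of it leaves the Gagliardo form.
  have hinn : ∀ i (v : hsGraph n s Ω), inner ℝ (w i : AmbK n s Ω).snd (v : AmbK n s Ω).snd =
      (1 / μ i - 1) * inner ℝ (w i : AmbK n s Ω).fst (v : AmbK n s Ω).fst := by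
    intro i v
    have h1 : inner ℝ (w i) v = inner ℝ (e i) (v : AmbK n s Ω).fst :=
      hwv i v
    rw [Submodule.coe_inner, WithLp.prod_inner_apply] at h1
    have h2 : inner ℝ (w i : AmbK n s Ω).fst (v : AmbK n s Ω).fst =
        μ i * inner ℝ (e i) (v : AmbK n s Ω).fst := by
      rw [hTw, real_inner_smul_left]
    change inner ℝ (w i : AmbK n s Ω).fst (v : AmbK n s Ω).fst +
      inner ℝ (w i : AmbK n s Ω).snd (v : AmbK n s Ω).snd = _ at h1
    have := (hμ i).ne'
    rw [h2] at h1 ⊢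
    field_simp
    linarith
  -- Testing with `w i` itself: the Gagliardo form is nonnegative.
  have hle : ∀ i, μ i ≤ 1 := by
    intro i
    have h1 := hinn i (w i)
    rw [real_inner_self_eq_norm_sq, real_inner_self_eq_norm_sq, hTw, norm_smul, he.1 i,
      mul_one, Real.norm_of_nonneg (hμ i).le] at h1
    have h2 : 0 ≤ (1 / μ i - 1) * μ i ^ 2 := h1 ▸ sq_nonneg _
    have h3 := hμ i
    have h4 : 0 ≤ 1 / μ i - 1 := nonneg_of_mul_nonneg_left h2 (by positivity)
    rw [sub_nonneg, le_div_iff₀ h3] at h4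
    linarith
  choose U hUm hU1 hU2 using fun i => (w i).2
  -- The constant function `1` lies in the energy space and has zero energy.
  obtain ⟨w1, hw1, hw1'⟩ := exists_graph (n := n) (s := s) (Ω := Ω) (v := fun _ => (1 : ℝ))
    measurable_const (by simpa using hb.measure_lt_top) (by simp)
  have hw1s : (w1 : AmbK n s Ω).snd = 0 := by
    refine (Lp.eq_zero_iff_ae_eq_zero).2 ?_
    filter_upwards [hw1'] with p hp
    simpa using hp
  have hNeBot : (ae (volume.restrict Ω)).NeBot := by
    rw [ae_neBot]; simpa using (hop.measure_pos volume hne).ne.symm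
  -- If all `μ i` were below `1`, testing with the constant `1` would make `1` orthogonal to
  -- every `e i`.
  have hμ0 : μ 0 = 1 := by
    by_contra hne0
    have hlt : ∀ i, μ i < 1 := fun i =>
      (hanti (Nat.zero_le i)).trans_lt (lt_of_le_of_ne (hle 0) hne0)
    have hz : (w1 : AmbK n s Ω).fst = 0 := by
      refine htot _ fun i => ?_
      have h1 := hinn i w1
      rw [hw1s, inner_zero_right, hTw, real_inner_smul_left, real_inner_comm] at h1
      have h2 : 1 / μ i - 1 ≠ 0 := by
        rw [sub_ne_zero, Ne, div_eq_iff (hμ i).ne', one_mul]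
        exact (hlt i).ne'
      rcases mul_eq_zero.1 h1.symm with h | h
      · exact absurd h h2
      · exact (mul_eq_zero.1 h).resolve_left (hμ i).ne'
    have h0 := (Lp.eq_zero_iff_ae_eq_zero).1 hz
    obtain ⟨x, hx, hx'⟩ := (h0.and hw1).exists
    rw [hx'] at hx
    simp at hx
  have hinU : ∀ i j, ∫ x in Ω, U i x * U j x = μ i * (μ j * inner ℝ (e i) (e j)) := by
    intro i j
    rw [← inner_Lp (hU1 i) (hU1 j), hTw, hTw, real_inner_smul_left, real_inner_smul_right]
  have hsq : ∀ i, ∫ x in Ω, U i x ^ 2 = μ i ^ 2 := by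
    intro i
    simp_rw [pow_two]
    rw [hinU, real_inner_self_eq_norm_sq, he.1 i]
    ring
  have horth : ∀ i j, i ≠ j → ∫ x in Ω, U i x * U j x = 0 := by
    intro i j hij
    rw [hinU, he.2 hij]; ring
  -- An eigenfunction with `μ i = 1` has zero energy, hence is a nonzero constant on `Ω`.
  have hconst : ∀ i, μ i = 1 → ∃ a : ℝ, a ≠ 0 ∧ ∀ᵐ x ∂(volume.restrict Ω), U i x = a := by
    intro i hi
    have h1 := hinn i (w i)
    rw [hi, div_one, sub_self, zero_mul, inner_self_eq_zero] at h1
    have h2 : ∀ᵐ p ∂(nuQ n s Ω), U i p.1 - U i p.2 = 0 := by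
      filter_upwards [hU2 i, (Lp.eq_zero_iff_ae_eq_zero).1 h1] with p hp hp'
      rw [← hp, hp']; rfl
    obtain ⟨a, ha⟩ := ae_const_of_snd_eq_zero hn hop hne h2
    refine ⟨a, ?_, ha⟩
    rintro rfl
    have h3 := hsq i
    rw [integral_eq_zero_of_ae (by filter_upwards [ha] with x hx; simp [hx]), hi] at h3
    norm_num at h3
  -- Two nonzero constants are not orthogonal in `L²(Ω)`, so the eigenvalue `1` is simple.
  have hμ1 : μ 1 < 1 := by
    refine lt_of_le_of_ne (hle 1) fun h => ?_
    obtain ⟨a, ha, ha'⟩ := hconst 0 hμ0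
    obtain ⟨b, hb0, hb'⟩ := hconst 1 h
    have h1 := horth 0 1 (by norm_num)
    have h2 : ∫ x in Ω, U 0 x * U 1 x = ∫ x in Ω, a * b :=
      integral_congr_ae (by filter_upwards [ha', hb'] with x hx hx'; rw [hx, hx'])
    rw [h2, setIntegral_const, smul_eq_mul] at h1
    have h3 : 0 < volume.real Ω := ENNReal.toReal_pos (hop.measure_pos volume hne).ne'
      hb.measure_lt_top.ne
    exact mul_ne_zero h3.ne' (mul_ne_zero ha hb0) h1
  have hc := cns_pos (n := n) hs
  refine ⟨fun i => cns n s / 2 * (1 / μ i - 1), U, ?_, ?_, ?_, ?_, horth, ?_, ?_⟩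
  · simp [hμ0]
  · simp only [hμ0, div_one, sub_self, mul_zero]
    have : 1 < 1 / μ 1 := by rw [lt_div_iff₀ (hμ 1)]; linarith
    have : 0 < 1 / μ 1 - 1 := by linarith
    positivity
  · intro i j hij
    have := one_div_le_one_div_of_le (hμ j) (hanti hij)
    simp only
    gcongr
  · intro i
    have hInHs : InHs n s Ω (fun _ => 0) (U i) := by
      refine ⟨hUm i, ?_, by simp, ?_⟩
      · exact (memLp_two_iff_integrable_sq (hUm i).aestronglyMeasurable).1
          ((memLp_congr_ae (hU1 i)).1 (Lp.memLp _))
      · exact (integrable_nuQ _).1 ((memLp_two_iff_integrable_sq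
          (((hUm i).comp measurable_fst).sub ((hUm i).comp measurable_snd)).aestronglyMeasurable).1
          ((memLp_congr_ae (hU2 i)).1 (Lp.memLp _)))
    refine ⟨hInHs, fun v hv => ?_⟩
    obtain ⟨z, hz1, hz2⟩ := exists_graph hv.1 hv.2.1 hv.2.2.2
    have h1 := hinn i z
    rw [inner_Lp (hU1 i) hz1, inner_Lp (hU2 i) hz2, integral_nuQ] at h1
    unfold gagliardo2
    rw [h1]
    simp only [zero_mul, integral_zero, add_zero, mul_assoc, integral_const_mul]
  · intro i
    rw [hsq]
    exact (pow_pos (hμ i) 2).ne'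
  · intro v hv hv2 horthv
    have m1 : MemLp v 2 (volume.restrict Ω) :=
      (memLp_two_iff_integrable_sq hv.aestronglyMeasurable).2 hv2
    have h0 : m1.toLp v = 0 := by
      refine htot _ fun i => ?_
      have h1 := horthv i
      rw [← inner_Lp m1.coeFn_toLp (hU1 i), hTw, real_inner_smul_right] at h1
      exact (mul_eq_zero.1 h1).resolve_left (hμ i).ne'
    filter_upwards [m1.coeFn_toLp, (Lp.eq_zero_iff_ae_eq_zero).1 h0] with x h1 h2
    rw [← h1, h2]; rfl
end

section
/- Let Ω ⊂ ℝ^n be a bounded open set, s ∈ (0,1), and let u : ℝ^n → ℝ satisfy u|_Ω ∈ L²(Ω) and the homogeneous nonlocal Neumann condition N_s u(x) = 0 for every x ∈ ℝ^n\closure(Ω), i.e. u(x) ∫_Ω |x−y|^{−n−2s} dy = ∫_Ω u(y)|x−y|^{−n−2s} dy for all such x. Then u(x) → (1/|Ω|) ∫_Ω u as |x| → ∞, uniformly in x. -/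
/-!
Let `Ω ⊆ closedBall 0 M`, let `m` be the mean of `u` over `Ω`, and put `p = n + 2 s`. For
`‖x‖ = r > M` the Neumann condition says that `u x` is the average of `u` over `Ω` with weight
`|x - y| ^ (-p)`, or equivalently with the rescaled weight `ρ y = ((r + M) / |x - y|) ^ p`. Since
`r - M ≤ |x - y| ≤ r + M`, this weight satisfies `1 ≤ ρ ≤ q r` with
`q r = ((r + M) / (r - M)) ^ p`. As `u - m` has zero integral over `Ω`,
`(u x - m) ∫ ρ = ∫ (u - m) ρ = ∫ (u - m) (ρ - 1)`, so `|u x - m| |Ω| ≤ (q r - 1) ∫ |u - m|`, and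
`q r → 1` as `r → ∞`. The abstract averaging estimate is `abs_sub_mean_le`.
-/

open MeasureTheory Filter Set Bornology
open scoped Topology ENNReal NNReal Pointwise symmDiff

/-- A weighted average of `u` with weight `1 ≤ ρ ≤ q` differs from the mean `m` of `u` by at most
`(q - 1) ‖u - m‖₁ / μ(univ)`. -/
lemma abs_sub_mean_le {α : Type*} [MeasurableSpace α] {μ : Measure α} [IsFiniteMeasure μ]
    {u ρ : α → ℝ} {a m q : ℝ} (hu : Integrable u μ) (hρm : AEStronglyMeasurable ρ μ)
    (h1 : ∀ᵐ y ∂μ, 1 ≤ ρ y) (h2 : ∀ᵐ y ∂μ, ρ y ≤ q)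
    (hm : m * μ.real univ = ∫ y, u y ∂μ)
    (hav : a * ∫ y, ρ y ∂μ = ∫ y, u y * ρ y ∂μ) :
    |a - m| * μ.real univ ≤ (q - 1) * ∫ y, |u y - m| ∂μ := by
  have hb : ∀ᵐ y ∂μ, ‖ρ y‖ ≤ q := by
    filter_upwards [h1, h2] with y hy1 hy2
    rwa [Real.norm_of_nonneg (by linarith)]
  have hρ : Integrable ρ μ := Integrable.of_bound hρm q hb
  have huρ : Integrable (fun y => u y * ρ y) μ := hu.mul_bdd (c := q) hρm hb
  have hV : μ.real univ ≤ ∫ y, ρ y ∂μ := by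
    have := integral_mono_ae (integrable_const (1 : ℝ)) hρ h1
    simpa using this
  have hum : Integrable (fun y => u y - m) μ := hu.sub (integrable_const m)
  have key : (a - m) * ∫ y, ρ y ∂μ = ∫ y, (u y - m) * (ρ y - 1) ∂μ := by
    have e : ∀ y, (u y - m) * (ρ y - 1) = (u y * ρ y - m * ρ y) - (u y - m) := fun y => by ring
    have hd : Integrable (fun y => u y * ρ y - m * ρ y) μ := huρ.sub (hρ.const_mul m)
    simp_rw [e]
    rw [integral_sub hd hum, integral_sub huρ (hρ.const_mul m),
      integral_sub hu (integrable_const m), integral_const_mul, integral_const, ← hav, ← hm,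
      smul_eq_mul]
    ring
  calc |a - m| * μ.real univ ≤ |a - m| * ∫ y, ρ y ∂μ := by gcongr
    _ = |(a - m) * ∫ y, ρ y ∂μ| := by
      rw [abs_mul, abs_of_nonneg (measureReal_nonneg.trans hV)]
    _ = ‖∫ y, (u y - m) * (ρ y - 1) ∂μ‖ := by rw [key, Real.norm_eq_abs]
    _ ≤ ∫ y, (q - 1) * |u y - m| ∂μ := by
      refine norm_integral_le_of_norm_le (hum.abs.const_mul _) ?_
      filter_upwards [h1, h2] with y hy1 hy2
      rw [norm_mul, Real.norm_eq_abs, Real.norm_of_nonneg (by linarith), mul_comm]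
      gcongr
    _ = (q - 1) * ∫ y, |u y - m| ∂μ := integral_const_mul _ _

lemma tendsto_ratio_rpow (M p : ℝ) :
    Tendsto (fun r : ℝ => ((r + M) / (r - M)) ^ p) atTop (𝓝 1) := by
  have h : Tendsto (fun r : ℝ => 1 + 2 * M * (r - M)⁻¹) atTop (𝓝 1) := by
    have : Tendsto (fun r : ℝ => (r - M)⁻¹) atTop (𝓝 0) :=
      tendsto_inv_atTop_zero.comp (tendsto_atTop_add_const_right _ (-M) tendsto_id)
    simpa using (this.const_mul (2 * M)).const_add 1
  have h' : Tendsto (fun r : ℝ => (r + M) / (r - M)) atTop (𝓝 1) := by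
    refine h.congr' ?_
    filter_upwards [eventually_gt_atTop M] with r hr
    have : r - M ≠ 0 := by linarith
    field_simp
    ring
  simpa using h'.rpow_const (p := p) (Or.inl one_ne_zero)

-- STATEMENT 8
theorem limit_at_infinity (n : ℕ) (hn : 0 < n) (s : ℝ) (hs : s ∈ Set.Ioo (0 : ℝ) 1)
    (Ω : Set (En n)) (hΩo : IsOpen Ω) (hΩb : IsBounded Ω) (hΩne : Ω.Nonempty)
    (u : En n → ℝ) (hum : Measurable u) (hL2 : IntegrableOn (fun x => u x ^ 2) Ω)
    (hNeu : ∀ x ∉ closure Ω,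
      u x * ∫ y in Ω, (nsKer n s x y)⁻¹ = ∫ y in Ω, u y / nsKer n s x y) :
    ∀ ε : ℝ, 0 < ε → ∃ R : ℝ, ∀ x : En n, R ≤ ‖x‖ →
      |u x - (volume Ω).toReal⁻¹ * ∫ y in Ω, u y| < ε := by
  intro ε hε
  obtain ⟨M, hM0, hM⟩ := hΩb.subset_closedBall_lt 0 0
  have hfin : volume Ω ≠ ∞ := hΩb.measure_lt_top.ne
  have : IsFiniteMeasure (volume.restrict Ω) := isFiniteMeasure_restrict.2 hfin
  have hVeq : (volume.restrict Ω).real univ = (volume Ω).toReal := by simp [Measure.real]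
  have hV : 0 < (volume Ω).toReal :=
    ENNReal.toReal_pos (hΩo.measure_pos volume hΩne).ne' hfin
  have hu : Integrable u (volume.restrict Ω) :=
    ((memLp_two_iff_integrable_sq hum.aestronglyMeasurable).2 hL2).integrable (by norm_num)
  set V := (volume Ω).toReal
  set m := V⁻¹ * ∫ y in Ω, u y with hmdef
  set p : ℝ := (n : ℝ) + 2 * s with hpdef
  have hp : 0 < p := by have := hs.1; positivity
  set A := ∫ y in Ω, |u y - m|
  have hlim : Tendsto (fun r : ℝ => (((r + M) / (r - M)) ^ p - 1) * A) atTop (𝓝 0) := by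
    simpa using ((tendsto_ratio_rpow M p).sub_const 1).mul_const A
  obtain ⟨R, hR⟩ := eventually_atTop.1
    ((hlim.eventually_lt_const (mul_pos hε hV)).and (eventually_gt_atTop M))
  refine ⟨R, fun x hx => ?_⟩
  obtain ⟨hsmall, hMx⟩ := hR _ hx
  have hxc : x ∉ closure Ω := fun h => by
    have := closure_minimal hM Metric.isClosed_closedBall h
    rw [mem_closedBall_zero_iff] at this
    linarith
  have hbd : ∀ y ∈ Ω, ‖x‖ - M ≤ dist x y ∧ dist x y ≤ ‖x‖ + M := fun y hy => by
    have hyM : ‖y‖ ≤ M := mem_closedBall_zero_iff.1 (hM hy)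
    rw [dist_eq_norm]
    exact ⟨by linarith [norm_sub_norm_le x y], by linarith [norm_sub_le x y]⟩
  have hxM : 0 < ‖x‖ - M := by linarith
  have hxM' : 0 < ‖x‖ + M := by linarith
  let ρ : En n → ℝ := fun y => (‖x‖ + M) ^ p * (nsKer n s x y)⁻¹
  have hρ : ∀ y, ρ y = ((‖x‖ + M) / dist x y) ^ p := fun y => by
    rw [Real.div_rpow hxM'.le dist_nonneg, div_eq_mul_inv]
    rfl
  have hmain := abs_sub_mean_le (μ := volume.restrict Ω) (u := u) (ρ := ρ) (a := u x) (m := m)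
    (q := ((‖x‖ + M) / (‖x‖ - M)) ^ p) hu ?_ ?_ ?_ ?_ ?_
  · rw [hVeq] at hmain
    exact lt_of_mul_lt_mul_right (hmain.trans_lt hsmall) hV.le
  · have : Measurable ρ := by
      simp only [ρ, nsKer]
      fun_prop
    exact this.aestronglyMeasurable
  · refine ae_restrict_of_forall_mem hΩo.measurableSet fun y hy => ?_
    obtain ⟨h1, h2⟩ := hbd y hy
    rw [hρ]
    exact Real.one_le_rpow ((one_le_div (by linarith)).2 h2) hp.le
  · refine ae_restrict_of_forall_mem hΩo.measurableSet fun y hy => ?_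
    obtain ⟨h1, h2⟩ := hbd y hy
    rw [hρ]
    have : 0 < dist x y := by linarith
    gcongr
  · rw [hVeq, hmdef]
    field_simp
  · have e : ∀ y, u y * ρ y = (‖x‖ + M) ^ p * (u y / nsKer n s x y) := fun y => by
      simp only [ρ]
      ring
    simp_rw [e]
    simp only [ρ]
    rw [integral_const_mul, integral_const_mul, ← hNeu x hxc]
    ring
end

section
/- Let Ω ⊂ ℝ^n be a bounded Lipschitz domain and u ∈ C²_0(ℝ^n) (a C² function with compact support). Then lim_{s→1⁻} (1−s) ∫∫_{Q(Ω)} |u(x)−u(y)|²/|x−y|^{n+2s} dx dy = (ω_{n−1}/(2n)) ∫_Ω |∇u|² dx, where ω_{n−1} is the surface measure of the unit sphere in ℝ^n. -/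
/-!
By symmetry of the integrand, the integral over `Q(Ω)` equals
`∫_{x ∈ Ω} ∫_{ℝⁿ} w(x + z) (u x - u (x + z))² / |z|^{n+2s} dz dx` with `w = 1` on `Ω` and `w = 2`
outside (`gagliardo_iterated`). After multiplication by `1 - s`, dominated convergence on the
bounded set `Ω` applies.

* Domination: the numerator is at most `A |z|²` (Lipschitz bound) and at most `K` (sup bound), so
  polar coordinates bound the inner integral by `ω_{n-1} (A / (2 - 2s) + K / (2s))`
  (`kernel_bound`), which is `O(1 / (1 - s))`.
* Pointwise limit: for `x` in the open set `Ω` the weight is `1` near `z = 0`, and there the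
  numerator is `⟪∇u(x), z⟫² + o(|z|²)`. The remainder and the region away from `0` vanish in the
  limit (`tendsto_of_littleO`); in particular the doubled interaction with the complement of `Ω`
  disappears. The quadratic term, truncated to the unit ball, gives exactly
  `ω_{n-1} / (2n) |∇u(x)|²` for every `s` (`model_integral`): by invariance under reflections
  `⟪a, z⟫²` may be replaced by `|a|² |z|² / n`.
-/

open MeasureTheory Filter Set Bornology
open scoped Topology ENNReal NNReal Pointwise symmDiff

/-! ### Radial integrals -/

/-- The radial profile `A r² / r^{n+2s}` for `r ≤ δ` and `K / r^{n+2s}` for `r > δ`. -/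
noncomputable def radProfile (n : ℕ) (s A K δ r : ℝ) : ℝ :=
  (if r ≤ δ then A * r ^ 2 else K) / r ^ ((n : ℝ) + 2 * s)

lemma pow_mul_radProfile_le {n : ℕ} (hn : 0 < n) {s A K δ r : ℝ} (hr : 0 < r) (h : r ≤ δ) :
    r ^ (n - 1) * radProfile n s A K δ r = A * r ^ (1 - 2 * s) := by
  have e : r ^ (1 - 2 * s) = r ^ (n - 1) * (r ^ 2 / r ^ ((n : ℝ) + 2 * s)) := by
    rw [← Real.rpow_natCast r (n - 1), ← Real.rpow_natCast r 2, ← Real.rpow_sub hr,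
      ← Real.rpow_add hr, Nat.cast_sub (by omega : 1 ≤ n)]
    congr 1; push_cast; ring
  rw [radProfile, if_pos h, e]; ring

lemma pow_mul_radProfile_gt {n : ℕ} (hn : 0 < n) {s A K δ r : ℝ} (hr : 0 < r) (h : δ < r) :
    r ^ (n - 1) * radProfile n s A K δ r = K * r ^ (-1 - 2 * s) := by
  have e : r ^ (-1 - 2 * s) = r ^ (n - 1) / r ^ ((n : ℝ) + 2 * s) := by
    rw [← Real.rpow_natCast r (n - 1), ← Real.rpow_sub hr, Nat.cast_sub (by omega : 1 ≤ n)]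
    congr 1; push_cast; ring
  rw [radProfile, if_neg (not_le.2 h), e]; ring

lemma radProfile_radial {n : ℕ} (hn : 0 < n) {s A K δ : ℝ} (hs : s ∈ Ioo (0 : ℝ) 1)
    (hδ : 0 < δ) :
    IntegrableOn (fun r : ℝ => r ^ (n - 1) • radProfile n s A K δ r) (Ioi 0) ∧
    ∫ r in Ioi (0 : ℝ), r ^ (n - 1) • radProfile n s A K δ r =
      A * (δ ^ (2 - 2 * s) / (2 - 2 * s)) + K * (δ ^ (-(2 * s)) / (2 * s)) := by
  obtain ⟨hs0, hs1⟩ := hs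
  have hcong1 : EqOn (fun r : ℝ => A * r ^ (1 - 2 * s))
      (fun r : ℝ => r ^ (n - 1) • radProfile n s A K δ r) (Ioc 0 δ) := fun r hr => by
    simp only [smul_eq_mul, pow_mul_radProfile_le hn hr.1 hr.2]
  have hcong2 : EqOn (fun r : ℝ => K * r ^ (-1 - 2 * s))
      (fun r : ℝ => r ^ (n - 1) • radProfile n s A K δ r) (Ioi δ) := fun r hr => by
    simp only [smul_eq_mul, pow_mul_radProfile_gt hn (hδ.trans hr) hr]
  have i1 : IntegrableOn (fun r : ℝ => r ^ (1 - 2 * s)) (Ioc 0 δ) := by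
    rw [← intervalIntegrable_iff_integrableOn_Ioc_of_le hδ.le]
    exact intervalIntegral.intervalIntegrable_rpow' (by linarith)
  have i2 : IntegrableOn (fun r : ℝ => r ^ (-1 - 2 * s)) (Ioi δ) :=
    integrableOn_Ioi_rpow_of_lt (by linarith) hδ
  have j1 := IntegrableOn.congr_fun (i1.const_mul A) hcong1 measurableSet_Ioc
  have j2 := IntegrableOn.congr_fun (i2.const_mul K) hcong2 measurableSet_Ioi
  rw [← Ioc_union_Ioi_eq_Ioi hδ.le]
  refine ⟨j1.union j2, ?_⟩
  rw [setIntegral_union Ioc_disjoint_Ioi_same measurableSet_Ioi j1 j2,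
    ← setIntegral_congr_fun measurableSet_Ioc hcong1,
    ← setIntegral_congr_fun measurableSet_Ioi hcong2, integral_const_mul, integral_const_mul,
    ← intervalIntegral.integral_of_le hδ.le, integral_rpow (Or.inl (by linarith)),
    integral_Ioi_rpow_of_lt (by linarith) hδ, Real.zero_rpow (by linarith)]
  have e1 : 1 - 2 * s + 1 = 2 - 2 * s := by ring
  have e2 : -1 - 2 * s + 1 = -(2 * s) := by ring
  rw [e1, e2, sub_zero, neg_div_neg_eq]

lemma radProfile_norm {n : ℕ} (hn : 0 < n) {s A K δ : ℝ} (hs : s ∈ Ioo (0 : ℝ) 1)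
    (hδ : 0 < δ) :
    Integrable (fun z : En n => radProfile n s A K δ ‖z‖) ∧
    ∫ z : En n, radProfile n s A K δ ‖z‖ = sphereSurf n *
      (A * (δ ^ (2 - 2 * s) / (2 - 2 * s)) + K * (δ ^ (-(2 * s)) / (2 * s))) := by
  have : Nonempty (Fin n) := ⟨⟨0, hn⟩⟩
  obtain ⟨h1, h2⟩ := radProfile_radial (A := A) (K := K) hn hs hδ
  constructor
  · rw [integrable_fun_norm_addHaar (volume : Measure (En n)) (f := radProfile n s A K δ)]
    simpa using h1
  · rw [integral_fun_norm_addHaar (volume : Measure (En n)) (radProfile n s A K δ)]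
    rw [finrank_euclideanSpace, Fintype.card_fin, h2, sphereSurf, Measure.real,
      nsmul_eq_mul, smul_eq_mul]
    ring

/-- A function bounded by `A |z|²` near the origin and by `K` elsewhere is integrable against
`|z|^{-n-2s}`, with an explicit bound. -/
lemma kernel_bound {n : ℕ} (hn : 0 < n) {s A K δ : ℝ} (hs : s ∈ Ioo (0 : ℝ) 1)
    (hδ : 0 < δ) {h : En n → ℝ} (hm : Measurable h)
    (hA : ∀ z, ‖z‖ ≤ δ → |h z| ≤ A * ‖z‖ ^ 2) (hK : ∀ z, δ < ‖z‖ → |h z| ≤ K) :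
    Integrable (fun z : En n => h z / ‖z‖ ^ ((n : ℝ) + 2 * s)) ∧
    |∫ z : En n, h z / ‖z‖ ^ ((n : ℝ) + 2 * s)| ≤ sphereSurf n *
      (A * (δ ^ (2 - 2 * s) / (2 - 2 * s)) + K * (δ ^ (-(2 * s)) / (2 * s))) := by
  obtain ⟨i1, i2⟩ := radProfile_norm (A := A) (K := K) hn hs hδ
  have hb : ∀ z : En n, ‖h z / ‖z‖ ^ ((n : ℝ) + 2 * s)‖ ≤ radProfile n s A K δ ‖z‖ := by
    intro z
    have hp : 0 ≤ ‖z‖ ^ ((n : ℝ) + 2 * s) := by positivity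
    rw [Real.norm_eq_abs, abs_div, abs_of_nonneg hp, radProfile]
    refine div_le_div_of_nonneg_right ?_ hp
    split_ifs with hz
    · exact hA z hz
    · exact hK z (not_le.1 hz)
  constructor
  · refine i1.mono' ?_ (Eventually.of_forall hb)
    exact (hm.div (measurable_norm.pow_const _)).aestronglyMeasurable
  · rw [← i2, ← Real.norm_eq_abs]
    exact norm_integral_le_of_norm_le i1 (Eventually.of_forall hb)

/-! ### The quadratic model term -/

/-- A reflection exchanges two vectors of equal norm and preserves radial weights. -/
lemma integral_inner_sq_eq {n : ℕ} (f : ℝ → ℝ) {v w : En n} (hvw : ‖v‖ = ‖w‖) :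
    ∫ z : En n, inner ℝ v z ^ 2 * f ‖z‖ = ∫ z : En n, inner ℝ w z ^ 2 * f ‖z‖ := by
  let R : En n ≃ₗᵢ[ℝ] En n := (ℝ ∙ (v - w))ᗮ.reflection
  have hR : R v = w := Submodule.reflection_sub hvw
  rw [← (R.measurePreserving).integral_comp R.toHomeomorph.measurableEmbedding
    (fun z => inner ℝ w z ^ 2 * f ‖z‖)]
  simp only [← hR, LinearIsometryEquiv.inner_map_map, LinearIsometryEquiv.norm_map]

/-- Rotational averaging: `n ∫ ⟪a, z⟫² f(|z|) = |a|² ∫ |z|² f(|z|)`. -/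
lemma integral_inner_sq {n : ℕ} (f : ℝ → ℝ) (hf : Measurable f)
    (hi : Integrable (fun z : En n => ‖z‖ ^ 2 * f ‖z‖)) (a : En n) :
    (n : ℝ) * ∫ z : En n, inner ℝ a z ^ 2 * f ‖z‖ =
      ‖a‖ ^ 2 * ∫ z : En n, ‖z‖ ^ 2 * f ‖z‖ := by
  have h1 : ∀ i : Fin n, ∫ z : En n, inner ℝ a z ^ 2 * f ‖z‖ =
      ∫ z : En n, ‖a‖ ^ 2 * (z i ^ 2 * f ‖z‖) := by
    intro i
    rw [integral_inner_sq_eq f (w := EuclideanSpace.single i ‖a‖) (by simp)]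
    congr 1; ext z
    simp [EuclideanSpace.inner_single_left, mul_pow, mul_assoc]
  have hint : ∀ i : Fin n, Integrable (fun z : En n => ‖a‖ ^ 2 * (z i ^ 2 * f ‖z‖)) := by
    intro i
    refine (hi.mono ?_ (Eventually.of_forall fun z => ?_)).const_mul _
    · have : Measurable fun z : En n => z i := by fun_prop
      exact ((this.pow_const 2).mul (hf.comp measurable_norm)).aestronglyMeasurable
    · rw [norm_mul, norm_mul, norm_pow, norm_pow, norm_norm]
      gcongr
      exact PiLp.norm_apply_le z i
  calc (n : ℝ) * ∫ z : En n, inner ℝ a z ^ 2 * f ‖z‖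
      = ∑ i : Fin n, ∫ z : En n, inner ℝ a z ^ 2 * f ‖z‖ := by simp
    _ = ∑ i : Fin n, ∫ z : En n, ‖a‖ ^ 2 * (z i ^ 2 * f ‖z‖) :=
        Finset.sum_congr rfl fun i _ => h1 i
    _ = ∫ z : En n, ‖a‖ ^ 2 * (‖z‖ ^ 2 * f ‖z‖) := by
        rw [← integral_finsetSum _ fun i _ => hint i]
        congr 1; ext z
        rw [EuclideanSpace.norm_sq_eq z, ← Finset.mul_sum, Finset.sum_mul]
        simp
    _ = _ := integral_const_mul _ _

/-- The normalized integral of the quadratic term, truncated at radius one, does not depend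
on `s`. -/
lemma model_integral {n : ℕ} (hn : 0 < n) {s : ℝ} (hs : s ∈ Ioo (0 : ℝ) 1) (a : En n) :
    (1 - s) * ∫ z : En n, (if ‖z‖ ≤ 1 then inner ℝ a z ^ 2 else 0) / ‖z‖ ^ ((n : ℝ) + 2 * s) =
      sphereSurf n / (2 * n) * ‖a‖ ^ 2 := by
  let f : ℝ → ℝ := fun r => (if r ≤ 1 then 1 else 0) / r ^ ((n : ℝ) + 2 * s)
  have hf : Measurable f :=
    (Measurable.ite measurableSet_Iic measurable_const measurable_const).div
      (measurable_id.pow_const _)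
  obtain ⟨i1, i2⟩ := radProfile_norm (A := 1) (K := 0) hn hs one_pos
  have e : (fun z : En n => ‖z‖ ^ 2 * f ‖z‖) = fun z => radProfile n s 1 0 1 ‖z‖ := by
    ext z; simp only [f, radProfile]; split_ifs <;> ring
  have key := integral_inner_sq f hf (e ▸ i1) a
  rw [e, i2] at key
  have e2 : (fun z : En n => (if ‖z‖ ≤ 1 then inner ℝ a z ^ 2 else 0) / ‖z‖ ^ ((n : ℝ) + 2 * s))
      = fun z => inner ℝ a z ^ 2 * f ‖z‖ := by
    ext z; simp only [f]; split_ifs <;> ring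
  rw [e2]
  have hn' : (n : ℝ) ≠ 0 := by positivity
  have hs' : (1 - s) ≠ 0 := by have := hs.2; intro h; linarith
  have e3 : (2 - 2 * s) = 2 * (1 - s) := by ring
  rw [Real.one_rpow, zero_mul, add_zero, one_mul, e3] at key
  apply mul_left_cancel₀ hn'
  rw [mul_left_comm, key]
  field_simp

/-! ### Concentration at the origin and reduction to iterated integrals -/

lemma sphereSurf_nonneg (n : ℕ) : 0 ≤ sphereSurf n := by
  unfold sphereSurf; positivity

/-- Bounded functions that are `o(|z|²)` at the origin do not contribute in the limit: the
kernels `(1 - s) |z|^{2-n-2s}` concentrate at the origin with bounded mass. -/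
lemma tendsto_of_littleO {n : ℕ} (hn : 0 < n) {K : ℝ} {h : En n → ℝ} (hm : Measurable h)
    (hK : ∀ z, |h z| ≤ K)
    (h0 : ∀ ε > 0, ∃ δ > 0, ∀ z : En n, ‖z‖ ≤ δ → |h z| ≤ ε * ‖z‖ ^ 2) :
    Tendsto (fun s : ℝ => (1 - s) * ∫ z : En n, h z / ‖z‖ ^ ((n : ℝ) + 2 * s))
      (𝓝[Ioo (0 : ℝ) 1] 1) (𝓝 0) := by
  rw [Metric.tendsto_nhds]
  intro ε hε
  have hS := sphereSurf_nonneg n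
  obtain ⟨δ, hδ, hδh⟩ := h0 (ε / (sphereSurf n + 1)) (by positivity)
  set η := ε / (sphereSurf n + 1) with hη
  let b : ℝ → ℝ := fun s =>
    sphereSurf n * (η * (δ ^ (2 - 2 * s) / 2) + (1 - s) * (K * (δ ^ (-(2 * s)) / (2 * s))))
  have hb : ContinuousAt b 1 := by
    have c1 : ContinuousAt (fun s : ℝ => δ ^ (2 - 2 * s)) 1 :=
      ContinuousAt.rpow continuousAt_const (by fun_prop) (Or.inl hδ.ne')
    have c2 : ContinuousAt (fun s : ℝ => δ ^ (-(2 * s))) 1 :=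
      ContinuousAt.rpow continuousAt_const (by fun_prop) (Or.inl hδ.ne')
    have c3 : ContinuousAt (fun s : ℝ => δ ^ (-(2 * s)) / (2 * s)) 1 :=
      c2.div (by fun_prop) (by norm_num)
    exact continuousAt_const.mul ((continuousAt_const.mul (c1.div_const 2)).add
      ((continuousAt_const.sub continuousAt_id).mul (continuousAt_const.mul c3)))
  have hb1 : b 1 < ε := by
    have e : b 1 = sphereSurf n * η / 2 := by simp [b]; ring
    have : (sphereSurf n + 1) * η = ε := by rw [hη]; field_simp
    have hηp : 0 < η := by positivity
    rw [e]; nlinarith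
  have hev : ∀ᶠ s in 𝓝[Ioo (0 : ℝ) 1] 1, b s < ε :=
    (hb.eventually_lt_const hb1).filter_mono nhdsWithin_le_nhds
  filter_upwards [hev, self_mem_nhdsWithin] with s hs1 hs
  have h1s : 0 < 1 - s := by linarith [hs.2]
  have := (kernel_bound hn hs hδ hm hδh (fun z _ => hK z)).2
  rw [Real.dist_eq, sub_zero, abs_mul, abs_of_pos h1s]
  refine lt_of_le_of_lt (mul_le_mul_of_nonneg_left this h1s.le) (lt_of_eq_of_lt ?_ hs1)
  have e3 : (2 - 2 * s) = 2 * (1 - s) := by ring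
  have e4 : δ ^ (2 - 2 * s) / (2 - 2 * s) * (1 - s) = δ ^ (2 - 2 * s) / 2 := by
    rw [div_mul_eq_mul_div, div_eq_div_iff (by linarith) (by norm_num)]; ring
  simp only [b]
  rw [← e4]; ring

/-- The integral of a symmetric function over `Q(Ω)` as an iterated integral over `x ∈ Ω`, where
the points `y ∉ Ω` count twice. -/
lemma integral_Qset {n : ℕ} {Ω : Set (En n)} (hΩ : MeasurableSet Ω) {g : En n × En n → ℝ}
    (hsymm : ∀ p, g p.swap = g p) (hi : IntegrableOn g (Ω ×ˢ univ))
    (hix : ∀ x, Integrable fun y => g (x, y)) :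
    ∫ p in Qset n Ω, g p = ∫ x in Ω, ∫ y, Ωᶜ.indicator 1 y * g (x, y) + g (x, y) := by
  have hQ : Qset n Ω = (Ω ×ˢ univ) ∪ (Ωᶜ ×ˢ Ω) := by
    ext ⟨x, y⟩; simp only [Qset, mem_compl_iff, mem_prod, mem_union, mem_univ]; tauto
  have hd : Disjoint (Ω ×ˢ (univ : Set (En n))) (Ωᶜ ×ˢ Ω) :=
    Set.disjoint_left.2 fun p h1 h2 => h2.1 h1.1
  have hi2 : IntegrableOn g (Ω ×ˢ Ωᶜ) := hi.mono_set (prod_mono_right (subset_univ _))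
  have hpre : (Prod.swap ⁻¹' (Ω ×ˢ Ωᶜ) : Set (En n × En n)) = Ωᶜ ×ˢ Ω := by
    ext ⟨x, y⟩; simp
  have hmp : MeasurePreserving (Prod.swap : En n × En n → En n × En n) volume volume :=
    Measure.measurePreserving_swap
  have hemb : MeasurableEmbedding (Prod.swap : En n × En n → En n × En n) :=
    MeasurableEquiv.prodComm.measurableEmbedding
  have hgs : g ∘ Prod.swap = g := funext hsymm
  have hi3 : IntegrableOn g (Ωᶜ ×ˢ Ω) := by
    have := (hmp.integrableOn_comp_preimage hemb (f := g) (s := Ω ×ˢ Ωᶜ)).2 hi2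
    rwa [hpre, hgs] at this
  have hswap : ∫ p in Ωᶜ ×ˢ Ω, g p = ∫ p in Ω ×ˢ Ωᶜ, g p := by
    rw [← hmp.setIntegral_preimage_emb hemb g (Ω ×ˢ Ωᶜ), hpre]
    simp only [hsymm]
  rw [hQ, setIntegral_union hd (hΩ.compl.prod hΩ) hi hi3, hswap]
  have a1 := setIntegral_prod g (μ := volume) (ν := volume) hi
  have a2 := setIntegral_prod g (μ := volume) (ν := volume) hi2
  rw [← Measure.volume_eq_prod] at a1 a2
  have b1 : Integrable (fun x => ∫ y in univ, g (x, y)) (volume.restrict Ω) := by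
    rw [IntegrableOn, Measure.volume_eq_prod, ← Measure.prod_restrict] at hi
    exact hi.integral_prod_left
  have b2 : Integrable (fun x => ∫ y in Ωᶜ, g (x, y)) (volume.restrict Ω) := by
    rw [IntegrableOn, Measure.volume_eq_prod, ← Measure.prod_restrict] at hi2
    exact hi2.integral_prod_left
  rw [a1, a2, ← integral_add b1 b2]
  congr 1; ext x
  have e : (fun y => Ωᶜ.indicator 1 y * g (x, y)) = Ωᶜ.indicator (fun y => g (x, y)) := by
    ext y; by_cases hy : y ∈ Ωᶜ <;> simp [hy]
  rw [integral_add (by rw [e]; exact (hix x).indicator hΩ.compl) (hix x), e,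
    integral_indicator hΩ.compl, setIntegral_univ, add_comm]

/-! ### Weighted increments -/

/-- The squared increment of `u` from `x` to `x + z`, counted twice when `x + z ∉ Ω`. -/
noncomputable def wInc {n : ℕ} (Ω : Set (En n)) (u : En n → ℝ) (x z : En n) : ℝ :=
  (Ωᶜ.indicator 1 (x + z) + 1) * (u x - u (x + z)) ^ 2

lemma weight_bounds {n : ℕ} (Ω : Set (En n)) (y : En n) :
    1 ≤ Ωᶜ.indicator (1 : En n → ℝ) y + 1 ∧ Ωᶜ.indicator (1 : En n → ℝ) y + 1 ≤ 2 := by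
  by_cases hy : y ∈ Ωᶜ
  · rw [indicator_of_mem hy]; norm_num
  · rw [indicator_of_notMem hy]; norm_num

lemma measurable_wInc {n : ℕ} {Ω : Set (En n)} (hΩ : MeasurableSet Ω) {u : En n → ℝ}
    (hu : Measurable u) (x : En n) : Measurable (wInc Ω u x) := by
  have hx : Measurable fun z : En n => x + z := by fun_prop
  have h1 : Measurable (Ωᶜ.indicator (1 : En n → ℝ)) := measurable_one.indicator hΩ.compl
  exact ((h1.comp hx).add_const 1).mul (((hu.comp hx).const_sub _).pow_const 2)

lemma abs_wInc_le {n : ℕ} (Ω : Set (En n)) (u : En n → ℝ) (x z : En n) :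
    |wInc Ω u x z| ≤ 2 * |u x - u (x + z)| ^ 2 := by
  obtain ⟨h1, h2⟩ := weight_bounds Ω (x + z)
  rw [wInc, abs_mul, abs_pow, abs_of_nonneg (by linarith)]
  gcongr

lemma abs_wInc_le_lip {n : ℕ} (Ω : Set (En n)) {u : En n → ℝ} {L : ℝ≥0}
    (hL : LipschitzWith L u) (x z : En n) :
    |wInc Ω u x z| ≤ 2 * (L : ℝ) ^ 2 * ‖z‖ ^ 2 := by
  have h := hL.dist_le_mul x (x + z)
  rw [Real.dist_eq, dist_self_add_right] at h
  calc |wInc Ω u x z| ≤ 2 * |u x - u (x + z)| ^ 2 := abs_wInc_le ..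
    _ ≤ 2 * (L * ‖z‖) ^ 2 := by gcongr
    _ = _ := by ring

lemma abs_wInc_le_bdd {n : ℕ} (Ω : Set (En n)) {u : En n → ℝ} {M : ℝ}
    (hM : ∀ x, ‖u x‖ ≤ M) (x z : En n) :
    |wInc Ω u x z| ≤ 2 * (M + M) ^ 2 := by
  have h : |u x - u (x + z)| ≤ M + M := (norm_sub_le _ _).trans (add_le_add (hM _) (hM _))
  calc |wInc Ω u x z| ≤ 2 * |u x - u (x + z)| ^ 2 := abs_wInc_le ..
    _ ≤ _ := by gcongr

/-- First-order expansion: near `z = 0` the weighted squared increment agrees with `⟪∇u(x), z⟫²`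
up to `o(|z|²)`. Openness of `Ω` makes the weight equal to one for small `z`. -/
lemma wInc_sub_littleO {n : ℕ} {Ω : Set (En n)} (hΩ : IsOpen Ω) {u : En n → ℝ} {L : ℝ≥0}
    (hL : LipschitzWith L u) {x : En n} (hx : x ∈ Ω) (hd : DifferentiableAt ℝ u x)
    {ε : ℝ} (hε : 0 < ε) :
    ∃ δ > 0, ∀ z : En n, ‖z‖ ≤ δ →
      |wInc Ω u x z - (if ‖z‖ ≤ 1 then inner ℝ (gradient u x) z ^ 2 else 0)|
        ≤ ε * ‖z‖ ^ 2 := by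
  set a := gradient u x
  have hη : 0 < ε / (L + ‖a‖ + 1) := by positivity
  have h1 := (hasGradientAt_iff_isLittleO_nhds_zero.1 hd.hasGradientAt).def hη
  have h2 : ∀ᶠ z : En n in 𝓝 0, x + z ∈ Ω := by
    have : Tendsto (fun z : En n => x + z) (𝓝 0) (𝓝 x) := by
      have : Continuous fun z : En n => x + z := by fun_prop
      simpa using this.tendsto 0
    exact this.eventually (hΩ.mem_nhds hx)
  obtain ⟨r, hr, hball⟩ := Metric.eventually_nhds_iff.1 (h1.and h2)
  refine ⟨min (r / 2) 1, by positivity, fun z hz => ?_⟩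
  have hz1 : ‖z‖ ≤ 1 := hz.trans (min_le_right _ _)
  have hzr : ‖z‖ < r := lt_of_le_of_lt (hz.trans (min_le_left _ _)) (by linarith)
  obtain ⟨hA, hB⟩ := @hball z (by simpa using hzr)
  have hw : Ωᶜ.indicator (1 : En n → ℝ) (x + z) = 0 := indicator_of_notMem (by simpa using hB) _
  have hlip := hL.dist_le_mul (x + z) x
  rw [Real.dist_eq, dist_self_add_left] at hlip
  have hin : |inner ℝ a z| ≤ ‖a‖ * ‖z‖ := abs_real_inner_le_norm a z
  rw [Real.norm_eq_abs] at hA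
  rw [if_pos hz1, wInc, hw]
  have e : (0 + 1) * (u x - u (x + z)) ^ 2 - inner ℝ a z ^ 2 =
      (u (x + z) - u x - inner ℝ a z) * ((u (x + z) - u x) + inner ℝ a z) := by ring
  rw [e, abs_mul]
  calc _ ≤ (ε / (L + ‖a‖ + 1) * ‖z‖) * (L * ‖z‖ + ‖a‖ * ‖z‖) :=
        mul_le_mul hA ((abs_add_le _ _).trans (add_le_add hlip hin)) (abs_nonneg _) (by positivity)
    _ = (ε / (L + ‖a‖ + 1) * (L + ‖a‖)) * ‖z‖ ^ 2 := by ring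
    _ ≤ ε * ‖z‖ ^ 2 := by
        gcongr
        rw [div_mul_eq_mul_div, div_le_iff₀ (by positivity)]
        nlinarith

lemma wInc_tendsto {n : ℕ} (hn : 0 < n) {Ω : Set (En n)} (hΩ : IsOpen Ω) {u : En n → ℝ}
    {L : ℝ≥0} {M : ℝ} (hL : LipschitzWith L u) (hM : ∀ x, ‖u x‖ ≤ M) {x : En n} (hx : x ∈ Ω)
    (hd : DifferentiableAt ℝ u x) :
    Tendsto (fun s : ℝ => (1 - s) * ∫ z : En n, wInc Ω u x z / ‖z‖ ^ ((n : ℝ) + 2 * s))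
      (𝓝[Ioo (0 : ℝ) 1] 1) (𝓝 (sphereSurf n / (2 * n) * ‖gradient u x‖ ^ 2)) := by
  set a := gradient u x
  let q : En n → ℝ := fun z => if ‖z‖ ≤ 1 then inner ℝ a z ^ 2 else 0
  have hqm : Measurable q := by
    have h1 : Measurable fun z : En n => inner ℝ a z ^ 2 := by fun_prop
    exact Measurable.ite (measurableSet_le measurable_norm measurable_const) h1 measurable_const
  have hin : ∀ z : En n, |inner ℝ a z ^ 2| ≤ ‖a‖ ^ 2 * ‖z‖ ^ 2 := fun z => by
    rw [abs_pow, ← mul_pow]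
    exact pow_le_pow_left₀ (abs_nonneg _) (abs_real_inner_le_norm a z) 2
  have hq1 : ∀ z : En n, ‖z‖ ≤ 1 → |q z| ≤ ‖a‖ ^ 2 * ‖z‖ ^ 2 := fun z hz => by
    simp only [q, if_pos hz]; exact hin z
  have hq2 : ∀ z : En n, 1 < ‖z‖ → |q z| ≤ 0 := fun z hz => by
    simp only [q, if_neg (not_le.2 hz), abs_zero, le_refl]
  have hqb : ∀ z : En n, |q z| ≤ ‖a‖ ^ 2 := fun z => by
    rcases le_or_gt ‖z‖ 1 with hz | hz
    · refine (hq1 z hz).trans (mul_le_of_le_one_right (by positivity) ?_)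
      exact pow_le_one₀ (norm_nonneg _) hz
    · exact (hq2 z hz).trans (by positivity)
  have hwm := measurable_wInc hΩ.measurableSet hL.continuous.measurable x
  have key := tendsto_of_littleO hn (h := fun z => wInc Ω u x z - q z)
    (K := 2 * (M + M) ^ 2 + ‖a‖ ^ 2) (hwm.sub hqm)
    (fun z => (abs_sub _ _).trans (add_le_add (abs_wInc_le_bdd Ω hM x z) (hqb z)))
    (fun ε hε => wInc_sub_littleO hΩ hL hx hd hε)
  have := key.add_const (sphereSurf n / (2 * n) * ‖a‖ ^ 2)
  rw [zero_add] at this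
  refine this.congr' ?_
  filter_upwards [self_mem_nhdsWithin] with s hs
  have i1 := (kernel_bound hn hs one_pos hwm (fun z _ => abs_wInc_le_lip Ω hL x z)
    (fun z _ => abs_wInc_le_bdd Ω hM x z)).1
  have i2 := (kernel_bound hn hs one_pos hqm hq1 hq2).1
  rw [← model_integral hn hs a, ← mul_add]
  simp only [sub_div]
  rw [integral_sub i1 i2, sub_add_cancel]

lemma inner_integral_eq {n : ℕ} (Ω : Set (En n)) (u : En n → ℝ) (s : ℝ) (x : En n) :
    ∫ y, Ωᶜ.indicator 1 y * ((u x - u y) ^ 2 / nsKer n s x y) + (u x - u y) ^ 2 / nsKer n s x y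
      = ∫ z : En n, wInc Ω u x z / ‖z‖ ^ ((n : ℝ) + 2 * s) := by
  rw [← integral_add_left_eq_self _ x]
  congr 1; ext z
  rw [nsKer, dist_self_add_right, wInc]; ring

/-- The Gagliardo integral over `Q(Ω)` as an iterated integral over `Ω`. -/
lemma gagliardo_iterated {n : ℕ} (hn : 0 < n) {Ω : Set (En n)} (hΩ : MeasurableSet Ω)
    (hfin : volume Ω < ∞) {u : En n → ℝ} {L : ℝ≥0} {M : ℝ} (hL : LipschitzWith L u)
    (hM : ∀ x, ‖u x‖ ≤ M) {s : ℝ} (hs : s ∈ Ioo (0 : ℝ) 1) :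
    ∫ p in Qset n Ω, (u p.1 - u p.2) ^ 2 / nsKer n s p.1 p.2 =
      ∫ x in Ω, ∫ z : En n, wInc Ω u x z / ‖z‖ ^ ((n : ℝ) + 2 * s) := by
  have hum := hL.continuous.measurable
  let g : En n × En n → ℝ := fun p => (u p.1 - u p.2) ^ 2 / nsKer n s p.1 p.2
  have hgm : Measurable g := by
    refine Measurable.div ?_ ?_
    · exact ((hum.comp measurable_fst).sub (hum.comp measurable_snd)).pow_const 2
    · exact (measurable_dist : Measurable fun p : En n × En n => dist p.1 p.2).pow_const _
  have hg0 : ∀ p, 0 ≤ g p := fun p => by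
    simp only [g, nsKer]; positivity
  -- With `Ω = univ` the weight in `wInc` is identically one.
  have hz : ∀ x z, g (x, x + z) = wInc univ u x z / ‖z‖ ^ ((n : ℝ) + 2 * s) := fun x z => by
    simp [g, nsKer, wInc]
  have hkb := fun x => kernel_bound hn hs one_pos (measurable_wInc MeasurableSet.univ hum x)
    (fun z _ => abs_wInc_le_lip univ hL x z) (fun z _ => abs_wInc_le_bdd univ hM x z)
  have hix : ∀ x, Integrable fun y => g (x, y) := fun x => by
    have := (hkb x).1
    simp only [← hz] at this
    simpa using this.comp_add_left (-x)
  have hi : IntegrableOn g (Ω ×ˢ univ) := by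
    rw [IntegrableOn, Measure.volume_eq_prod, ← Measure.prod_restrict, Measure.restrict_univ,
      integrable_prod_iff hgm.aestronglyMeasurable]
    refine ⟨Eventually.of_forall hix, ?_⟩
    refine Measure.integrableOn_of_bounded (M := sphereSurf n *
      (2 * (L : ℝ) ^ 2 * (1 ^ (2 - 2 * s) / (2 - 2 * s)) +
        2 * (M + M) ^ 2 * (1 ^ (-(2 * s)) / (2 * s)))) hfin.ne ?_ ?_
    · exact hgm.stronglyMeasurable.norm.integral_prod_right'.aestronglyMeasurable
    · refine Eventually.of_forall fun x => ?_
      have h1 := (hkb x).2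
      simp only [← hz] at h1
      rw [integral_add_left_eq_self (fun y => g (x, y)) x] at h1
      simpa only [Real.norm_of_nonneg (hg0 _), Real.norm_eq_abs] using h1
  have hsymm : ∀ p, g p.swap = g p := fun p => by
    simp only [g, nsKer, Prod.fst_swap, Prod.snd_swap, dist_comm p.2 p.1, sub_sq_comm (u p.2)]
  rw [integral_Qset hΩ hsymm hi hix]
  simp only [g, inner_integral_eq]

/-! ### The limit -/

-- STATEMENT 13
theorem limit_s_to_one_seminorm (n : ℕ) (hn : 0 < n)
    (Ω : Set (En n)) (hΩ : IsLipschitzDomain n Ω)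
    (u : En n → ℝ) (hu : ContDiff ℝ 2 u) (husupp : HasCompactSupport u) :
    Filter.Tendsto
      (fun s : ℝ => (1 - s) * ∫ p in Qset n Ω, (u p.1 - u p.2) ^ 2 / nsKer n s p.1 p.2)
      (𝓝[Set.Ioo (0 : ℝ) 1] 1)
      (𝓝 (sphereSurf n / (2 * n) * ∫ x in Ω, ‖gradient u x‖ ^ 2)) := by
  obtain ⟨hopen, hbdd, -, -⟩ := hΩ
  obtain ⟨L, hL⟩ := hu.lipschitzWith_of_hasCompactSupport husupp (by norm_num)
  obtain ⟨M, hM⟩ := husupp.exists_bound_of_continuous hu.continuous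
  have hfin : volume Ω < ∞ := hbdd.measure_lt_top
  have hS := sphereSurf_nonneg n
  have hum := hu.continuous.measurable
  rw [← integral_const_mul]
  have hlim : Tendsto (fun s : ℝ => ∫ x in Ω,
      (1 - s) * ∫ z : En n, wInc Ω u x z / ‖z‖ ^ ((n : ℝ) + 2 * s))
      (𝓝[Ioo (0 : ℝ) 1] 1)
      (𝓝 (∫ x in Ω, sphereSurf n / (2 * n) * ‖gradient u x‖ ^ 2)) := by
    refine tendsto_integral_filter_of_dominated_convergence
      (fun _ => sphereSurf n * ((L : ℝ) ^ 2 + (M + M) ^ 2)) ?_ ?_ ?_ ?_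
    · refine Eventually.of_forall fun s => ?_
      have hw : Measurable (Function.uncurry (wInc Ω u)) := by
        have hx : Measurable fun p : En n × En n => p.1 + p.2 := by fun_prop
        have h1 : Measurable (Ωᶜ.indicator (1 : En n → ℝ)) :=
          measurable_one.indicator hopen.measurableSet.compl
        exact ((h1.comp hx).add_const 1).mul
          (((hum.comp measurable_fst).sub (hum.comp hx)).pow_const 2)
      have hd : Measurable fun p : En n × En n =>
          Function.uncurry (wInc Ω u) p / ‖p.2‖ ^ ((n : ℝ) + 2 * s) :=
        hw.div (measurable_snd.norm.pow_const _)
      exact (hd.stronglyMeasurable.integral_prod_right'.const_mul (1 - s)).aestronglyMeasurable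
    · have hhalf : ∀ᶠ s : ℝ in 𝓝[Ioo (0 : ℝ) 1] 1, 1 / 2 < s :=
        (eventually_gt_nhds (by norm_num)).filter_mono nhdsWithin_le_nhds
      filter_upwards [hhalf, self_mem_nhdsWithin] with s hs2 hs
      refine Eventually.of_forall fun x => ?_
      have h1s : 0 < 1 - s := by linarith [hs.2]
      have hb := (kernel_bound hn hs one_pos (measurable_wInc hopen.measurableSet hum x)
        (fun z _ => abs_wInc_le_lip Ω hL x z) (fun z _ => abs_wInc_le_bdd Ω hM x z)).2
      rw [Real.one_rpow, Real.one_rpow] at hb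
      rw [Real.norm_eq_abs, abs_mul, abs_of_pos h1s]
      refine (mul_le_mul_of_nonneg_left hb h1s.le).trans ?_
      have e3 : (1 - s) * (1 / (2 - 2 * s)) = 1 / 2 := by
        rw [show 2 - 2 * s = 2 * (1 - s) by ring]; field_simp
      -- The tail factor `(1 - s) / (2 s)` is at most `1 / 2` because `s > 1 / 2`.
      have e4 : (1 - s) * (1 / (2 * s)) ≤ 1 / 2 := by
        rw [mul_one_div, div_le_div_iff₀ (by linarith) (by norm_num)]; linarith
      calc (1 - s) * (sphereSurf n * (2 * (L : ℝ) ^ 2 * (1 / (2 - 2 * s)) +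
            2 * (M + M) ^ 2 * (1 / (2 * s))))
          = sphereSurf n * (2 * (L : ℝ) ^ 2 * ((1 - s) * (1 / (2 - 2 * s))) +
            2 * (M + M) ^ 2 * ((1 - s) * (1 / (2 * s)))) := by ring
        _ ≤ sphereSurf n * (2 * (L : ℝ) ^ 2 * (1 / 2) + 2 * (M + M) ^ 2 * (1 / 2)) := by
            rw [e3]; gcongr
        _ = _ := by ring
    · exact integrableOn_const hfin.ne
    · refine (ae_restrict_iff' hopen.measurableSet).2 (Eventually.of_forall fun x hx => ?_)
      exact wInc_tendsto hn hopen hL hM hx (hu.differentiable (by norm_num) x)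
  refine hlim.congr' ?_
  filter_upwards [self_mem_nhdsWithin] with s hs
  rw [gagliardo_iterated hn hopen.measurableSet hfin hL hM hs, integral_const_mul]
end
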